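/- arXiv:1902.05438 — 5 statements merged into one kernel-verified Lean document; each statement's English description precedes it below -/
import Mathlib

section
/- If f : ℝ⁸ → ℂ is a radial Schwartz function such that f(√(2n)) = 0, f′(√(2n)) = 0, f̂(√(2n)) = 0, and f̂′(√(2n)) = 0 for every integer n ≥ 1, then f is identically zero. -/
noncomputable section

/-- A function on `ℝ⁸` is radial if its value depends only on the norm of the argument. -/
def IsRadial (f : EuclideanSpace ℝ (Fin 8) → ℂ) : Prop :=
  ∀ x y : EuclideanSpace ℝ (Fin 8), ‖x‖ = ‖y‖ → f x = f y

/-- The first standard basis vector of `ℝ⁸`. -/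
def e₁ : EuclideanSpace ℝ (Fin 8) := EuclideanSpace.single 0 1

/-- The radial value `f(r) = f(r·e₁)` of a Schwartz function. -/
def radVal (f : SchwartzMap (EuclideanSpace ℝ (Fin 8)) ℂ) (r : ℝ) : ℂ := f (r • e₁)

/-- The radial derivative `f′(r)`, the derivative at `t = r` of `t ↦ f(t·e₁)`. -/
def radDeriv (f : SchwartzMap (EuclideanSpace ℝ (Fin 8)) ℂ) (r : ℝ) : ℂ :=
  deriv (fun t : ℝ => f (t • e₁)) r

/-- The Fourier transform `f̂(y) = ∫ f(x) e^{-2πi⟨x,y⟩} dx` of a Schwartz function. -/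
def FT (f : SchwartzMap (EuclideanSpace ℝ (Fin 8)) ℂ) :
    SchwartzMap (EuclideanSpace ℝ (Fin 8)) ℂ :=
  SchwartzMap.fourierTransformCLM ℂ f

section

open MeasureTheory


lemma iu_decay {E : Type*} [NormedAddCommGroup E] (g : ℝ → E)
    (hc : Continuous g) (hS : ∀ x : ℝ, x ≠ 0 → ‖g (-1 / x)‖ = x ^ 4 * ‖g x‖) :
    ∃ K : ℝ, 0 ≤ K ∧ ∀ x, ‖g x‖ ≤ K / (1 + |x|) ^ 4 := by
  obtain ⟨C, hC⟩ := (isCompact_Icc (a := (-1 : ℝ)) (b := 1)).exists_bound_of_continuousOn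
    hc.continuousOn
  have hC0 : 0 ≤ C := (norm_nonneg _).trans (hC 0 (by simp))
  refine ⟨16 * C, by positivity, fun x => ?_⟩
  rw [le_div_iff₀ (by positivity)]
  by_cases hx : |x| ≤ 1
  · have h1 := hC x (by simpa [abs_le] using hx)
    have h2 : (1 + |x|) ^ 4 ≤ 2 ^ 4 := by gcongr; linarith
    have h3 : 0 ≤ (1 + |x|) ^ 4 := by positivity
    nlinarith [norm_nonneg (g x)]
  · push Not at hx
    have hx0 : x ≠ 0 := by rintro rfl; simp at hx; linarith
    have h1 := hC (-1 / x) (by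
      rw [Set.mem_Icc, ← abs_le, abs_div]
      simp
      rw [inv_le_one₀ (by linarith)]; exact hx.le)
    rw [hS x hx0] at h1
    have h2 : (1 + |x|) ^ 4 ≤ (2 * |x|) ^ 4 := by gcongr; linarith
    have h3 : (2 * |x|) ^ 4 = 16 * x ^ 4 := by
      rw [mul_pow, Even.pow_abs (by decide)]; norm_num
    rw [h3] at h2
    nlinarith [norm_nonneg (g x)]

lemma iu_W_integrable {N : ℝ → ℝ} (hN : Continuous N) (h0 : ∀ x, 0 ≤ N x) {K : ℝ} (hK : 0 ≤ K)
    (hb : ∀ x, N x ≤ K / (1 + |x|) ^ 4) : Integrable (fun x : ℝ => |x| * N x) := by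
  refine Integrable.mono' ((integrable_inv_one_add_sq).const_mul K)
    (by fun_prop) (Filter.Eventually.of_forall fun x => ?_)
  rw [Real.norm_eq_abs, abs_of_nonneg (mul_nonneg (abs_nonneg _) (h0 x))]
  have h1 := hb x
  rw [le_div_iff₀ (by positivity)] at h1
  rw [← div_eq_mul_inv, le_div_iff₀ (by positivity)]
  refine le_trans ?_ h1
  rw [mul_comm (|x|), mul_assoc]
  refine mul_le_mul_of_nonneg_left ?_ (h0 x)
  rw [← sq_abs]
  have : 0 ≤ |x| := abs_nonneg x
  ring_nf
  nlinarith [pow_nonneg this 3, pow_nonneg this 4, pow_nonneg this 2]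

lemma iu_inversion {N : ℝ → ℝ} (hN : Continuous N)
    (hS : ∀ x : ℝ, x ≠ 0 → N (-1 / x) = x ^ 4 * N x)
    (hi : Integrable (fun x : ℝ => |x| * N x)) :
    ∫ x, |x| * N x = 2 * ∫ x in (-1 : ℝ)..1, |x| * N x := by
  set s : Set ℝ := {u | u ≠ 0 ∧ |u| < 1} with hs
  have hsm : MeasurableSet s := by
    apply MeasurableSet.inter
    · exact (measurableSet_singleton (0 : ℝ)).compl
    · exact (isOpen_lt continuous_abs continuous_const).measurableSet
  have himg : (fun u : ℝ => -1 / u) '' s = {x | 1 < |x|} := by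
    ext x
    simp only [Set.mem_image, hs, Set.mem_ofPred_eq]
    constructor
    · rintro ⟨u, ⟨hu, hu1⟩, rfl⟩
      rw [abs_div]; simp
      exact (one_lt_inv₀ (abs_pos.2 hu)).2 hu1
    · intro hx
      have hx0 : x ≠ 0 := by rintro rfl; simp at hx; linarith
      refine ⟨-1 / x, ⟨by positivity, ?_⟩, by field_simp⟩
      rw [abs_div]; simp
      exact inv_lt_one_of_one_lt₀ hx
  have hinj : Set.InjOn (fun u : ℝ => -1 / u) s := by
    intro a ha b hb hab
    have := ha.1; have := hb.1
    simp only [neg_div, neg_inj, one_div, inv_inj] at hab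
    exact hab
  have hder : ∀ x ∈ s, HasDerivWithinAt (fun u : ℝ => -1 / u) (1 / x ^ 2) s x := by
    intro x hx
    have := ((hasDerivAt_inv hx.1).const_mul (-1)).hasDerivWithinAt (s := s)
    refine this.congr_deriv ?_ |>.congr (fun y _ => ?_) ?_
    · simp
    · simp [div_eq_mul_inv]
    · simp [div_eq_mul_inv]
  have key := integral_image_eq_integral_abs_deriv_smul hsm hder hinj (fun x => |x| * N x)
  rw [himg] at key
  have h2 : ∫ x in s, |1 / x ^ 2| • (|(-1 / x)| * N (-1 / x)) = ∫ x in s, |x| * N x := by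
    refine setIntegral_congr_fun hsm fun x hx => ?_
    have hx0 := hx.1
    have hx1 : |x| ≠ 0 := abs_ne_zero.2 hx0
    simp only [smul_eq_mul]
    rw [hS x hx0, abs_div, abs_div, abs_neg, abs_one, abs_pow]
    have : x ^ 4 = |x| ^ 4 := (Even.pow_abs (by decide) x).symm
    rw [this]
    field_simp
  rw [h2] at key
  have hae : s =ᵐ[volume] Set.Ioc (-1 : ℝ) 1 := by
    have h1 : ∀ᵐ x : ℝ, x ≠ 0 := by simp [ae_iff]
    have h3 : ∀ᵐ x : ℝ, x ≠ 1 := by simp [ae_iff]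
    filter_upwards [h1, h3] with x hx hx'
    apply propext
    change (x ≠ 0 ∧ |x| < 1) ↔ (-1 < x ∧ x ≤ 1)
    rw [abs_lt]
    constructor
    · rintro ⟨_, h, h'⟩; exact ⟨h, h'.le⟩
    · rintro ⟨h, h'⟩; exact ⟨hx, h, lt_of_le_of_ne h' hx'⟩
  have hae2 : ({x : ℝ | 1 < |x|} : Set ℝ) =ᵐ[volume] (Set.Ioc (-1 : ℝ) 1)ᶜ := by
    have h1 : ∀ᵐ x : ℝ, x ≠ -1 := by simp [ae_iff]
    filter_upwards [h1] with x hx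
    apply propext
    change (1 < |x|) ↔ ¬ (-1 < x ∧ x ≤ 1)
    rw [lt_abs]
    constructor
    · rintro (h | h) ⟨h', h''⟩ <;> linarith
    · intro h
      by_contra! h'
      exact h ⟨lt_of_le_of_ne (by linarith) (Ne.symm hx), h'.1⟩
  rw [setIntegral_congr_set hae, setIntegral_congr_set hae2] at key
  rw [intervalIntegral.integral_of_le (by norm_num),
    ← integral_add_compl (measurableSet_Ioc (a := (-1 : ℝ)) (b := 1)) hi]
  refine (congrArg (_ + ·) key).trans (by ring)

lemma iu_summable (K : ℝ) : Summable (fun n : ℤ => K / |(n : ℝ)| ^ 3) := by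
  have := (Real.summable_one_div_int_pow (p := 3)).2 (by norm_num)
  have := (this.abs).mul_left K
  refine this.congr fun n => ?_
  simp [div_eq_mul_inv, abs_inv, abs_pow]

lemma iu_bound {N : ℝ → ℝ} (h0 : ∀ x, 0 ≤ N x) {K : ℝ} (hK : 0 ≤ K)
    (hb : ∀ x, N x ≤ K / (1 + |x|) ^ 4) (x : ℝ) (m : ℝ) (hm : |m| ≤ 1 + |x|) :
    |m| * N x ≤ K / |m| ^ 3 := by
  rcases eq_or_ne m 0 with rfl | h
  · simp
  have hm0 : 0 < |m| := abs_pos.2 h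
  have h1 : N x ≤ K / |m| ^ 4 := (hb x).trans (by gcongr)
  calc |m| * N x ≤ |m| * (K / |m| ^ 4) := by gcongr
    _ = K / |m| ^ 3 := by field_simp

lemma iu_abs (t : ℝ) (ht : t ∈ Set.Icc (0 : ℝ) 1) (n : ℤ) :
    t * |(n : ℝ) + 1| + (1 - t) * |(n : ℝ)| = |t + n| := by
  obtain ⟨h0, h1⟩ := ht
  rcases le_or_gt 0 n with hn | hn
  · have : (0 : ℝ) ≤ n := by exact_mod_cast hn
    rw [abs_of_nonneg this, abs_of_nonneg (by linarith), abs_of_nonneg (by linarith)]; ring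
  · have : (n : ℝ) + 1 ≤ 0 := by exact_mod_cast hn
    rw [abs_of_nonpos this, abs_of_nonpos (by linarith : (n : ℝ) ≤ 0),
      abs_of_nonpos (by linarith)]; ring

/-- the equality case of the key inequality -/
lemma iu_key {N : ℝ → ℝ} (hN : Continuous N) (h0 : ∀ x, 0 ≤ N x) {K : ℝ} (hK : 0 ≤ K)
    (hb : ∀ x, N x ≤ K / (1 + |x|) ^ 4)
    (hS : ∀ x : ℝ, x ≠ 0 → N (-1 / x) = x ^ 4 * N x)
    (hA : ∀ t ∈ Set.Icc (0 : ℝ) 1, 2 * N t ≤ ∑' n : ℤ, |(n : ℝ) + 1| * N (t + n))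
    (hB : ∀ t ∈ Set.Icc (0 : ℝ) 1, 2 * N (t - 1) ≤ ∑' n : ℤ, |(n : ℝ)| * N (t + n)) :
    ∀ t ∈ Set.Icc (0 : ℝ) 1,
      HasSum (fun n : ℤ => |(n : ℝ) + 1| * N (t + n)) (2 * N t) ∧
      HasSum (fun n : ℤ => |(n : ℝ)| * N (t + n)) (2 * N (t - 1)) := by
  have sB := iu_summable K
  have sA : Summable (fun n : ℤ => K / |(n : ℝ) + 1| ^ 3) := by
    have := (Equiv.addRight (1 : ℤ)).summable_iff.2 sB
    refine this.congr fun n => ?_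
    simp
  have bA : ∀ n : ℤ, ∀ t ∈ Set.Icc (0 : ℝ) 1, |(n : ℝ) + 1| * N (t + n) ≤ K / |(n : ℝ) + 1| ^ 3 := by
    intro n t ht
    refine iu_bound h0 hK hb _ _ ?_
    calc |(n : ℝ) + 1| = |(1 - t) + (t + n)| := by congr 1; ring
      _ ≤ |1 - t| + |t + n| := abs_add_le _ _
      _ ≤ _ := by gcongr; rw [abs_le]; constructor <;> linarith [ht.1, ht.2]
  have bB : ∀ n : ℤ, ∀ t ∈ Set.Icc (0 : ℝ) 1, |(n : ℝ)| * N (t + n) ≤ K / |(n : ℝ)| ^ 3 := by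
    intro n t ht
    refine iu_bound h0 hK hb _ _ ?_
    calc |(n : ℝ)| = |(- t) + (t + n)| := by congr 1; ring
      _ ≤ |- t| + |t + n| := abs_add_le _ _
      _ ≤ _ := by gcongr; rw [abs_le]; constructor <;> linarith [ht.1, ht.2]
  have nA : ∀ n : ℤ, ∀ t, 0 ≤ |(n : ℝ) + 1| * N (t + n) := fun n t => mul_nonneg (abs_nonneg _) (h0 _)
  have nB : ∀ n : ℤ, ∀ t, 0 ≤ |(n : ℝ)| * N (t + n) := fun n t => mul_nonneg (abs_nonneg _) (h0 _)
  have smA : ∀ t ∈ Set.Icc (0 : ℝ) 1, Summable (fun n : ℤ => |(n : ℝ) + 1| * N (t + n)) :=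
    fun t ht => Summable.of_nonneg_of_le (fun n => nA n t) (fun n => bA n t ht) sA
  have smB : ∀ t ∈ Set.Icc (0 : ℝ) 1, Summable (fun n : ℤ => |(n : ℝ)| * N (t + n)) :=
    fun t ht => Summable.of_nonneg_of_le (fun n => nB n t) (fun n => bB n t ht) sB
  set A : ℝ → ℝ := fun t => (∑' n : ℤ, |(n : ℝ) + 1| * N (t + n)) - 2 * N t with hAdef
  set B : ℝ → ℝ := fun t => (∑' n : ℤ, |(n : ℝ)| * N (t + n)) - 2 * N (t - 1) with hBdef
  have cA : ContinuousOn A (Set.Icc 0 1) := by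
    refine ContinuousOn.sub (continuousOn_tsum (fun n => by fun_prop) sA fun n t ht => ?_)
      (by fun_prop)
    rw [Real.norm_eq_abs, abs_of_nonneg (nA n t)]
    exact bA n t ht
  have cB : ContinuousOn B (Set.Icc 0 1) := by
    refine ContinuousOn.sub (continuousOn_tsum (fun n => by fun_prop) sB fun n t ht => ?_)
      (by fun_prop)
    rw [Real.norm_eq_abs, abs_of_nonneg (nB n t)]
    exact bB n t ht
  have hi := iu_W_integrable hN h0 hK hb
  set W : ℝ → ℝ := fun x => |x| * N x with hW
  have cW : Continuous W := by fun_prop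
  have hinv : ∫ x, W x = 2 * ∫ x in (-1 : ℝ)..1, W x := iu_inversion hN hS hi
  -- the sum of W over a coset
  have hWsum : ∀ t ∈ Set.Icc (0 : ℝ) 1, HasSum (fun n : ℤ => W (t + n))
      (t * (∑' n : ℤ, |(n : ℝ) + 1| * N (t + n)) + (1 - t) * (∑' n : ℤ, |(n : ℝ)| * N (t + n))) := by
    intro t ht
    have := ((smA t ht).hasSum.mul_left t).add ((smB t ht).hasSum.mul_left (1 - t))
    refine this.congr_fun ?_ |> id
    intro n
    simp only [hW]
    rw [← iu_abs t ht n]; ring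
  have hint1 : HasSum (fun n : ℤ => ∫ t in (0 : ℝ)..1, W (t + n))
      (∫ t in (0 : ℝ)..1, (t * (∑' n : ℤ, |(n : ℝ) + 1| * N (t + n)) +
        (1 - t) * (∑' n : ℤ, |(n : ℝ)| * N (t + n)))) := by
    refine intervalIntegral.hasSum_integral_of_dominated_convergence
      (fun n _ => K / |(n : ℝ) + 1| ^ 3 + K / |(n : ℝ)| ^ 3) ?_ ?_ ?_ ?_ ?_
    · intro n
      exact (by fun_prop : Continuous fun t => W (t + n)).aestronglyMeasurable
    · intro n
      refine Filter.Eventually.of_forall fun t ht => ?_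
      rw [Set.uIoc_of_le zero_le_one] at ht
      have ht' : t ∈ Set.Icc (0 : ℝ) 1 := ⟨ht.1.le, ht.2⟩
      have h1 := bA n t ht'
      have h2 := bB n t ht'
      rw [Real.norm_eq_abs, abs_of_nonneg (mul_nonneg (abs_nonneg _) (h0 _))]
      rw [← iu_abs t ht' n]
      have := nA n t; have := nB n t
      nlinarith [ht'.1, ht'.2]
    · exact Filter.Eventually.of_forall fun t _ => sA.add sB
    · exact intervalIntegrable_const
    · refine Filter.Eventually.of_forall fun t ht => ?_
      rw [Set.uIoc_of_le zero_le_one] at ht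
      exact hWsum t ⟨ht.1.le, ht.2⟩
  have hint2 : HasSum (fun n : ℤ => ∫ t in (0 : ℝ)..1, W (t + n)) (∫ x, W x) := by
    have := hi.hasSum_intervalIntegral 0
    refine this.congr_fun ?_ |> id
    intro n
    rw [intervalIntegral.integral_comp_add_right]
    simp [add_comm]
  have heq := hint1.unique hint2
  have hsplit : ∫ x in (-1 : ℝ)..1, W x = ∫ t in (0 : ℝ)..1, (t * N t + (1 - t) * N (t - 1)) := by
    rw [← intervalIntegral.integral_add_adjacent_intervals (b := 0)
      (cW.intervalIntegrable _ _) (cW.intervalIntegrable _ _)]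
    have e1 : ∫ x in (-1 : ℝ)..0, W x = ∫ t in (0 : ℝ)..1, W (t - 1) := by
      rw [intervalIntegral.integral_comp_sub_right]; norm_num
    rw [e1, ← intervalIntegral.integral_add
      ((by fun_prop : Continuous fun t => W (t - 1)).intervalIntegrable _ _)
      (cW.intervalIntegrable _ _)]
    refine intervalIntegral.integral_congr fun t ht => ?_
    rw [Set.uIcc_of_le zero_le_one] at ht
    simp only [hW]
    rw [abs_of_nonneg ht.1, abs_of_nonpos (by linarith [ht.2])]; ring
  have cD : ContinuousOn (fun t => t * A t + (1 - t) * B t) (Set.Icc 0 1) := by fun_prop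
  have hA0 : ∀ t ∈ Set.Icc (0 : ℝ) 1, 0 ≤ A t := fun t ht => sub_nonneg.2 (hA t ht)
  have hB0 : ∀ t ∈ Set.Icc (0 : ℝ) 1, 0 ≤ B t := fun t ht => sub_nonneg.2 (hB t ht)
  have hD : ∫ t in (0 : ℝ)..1, (t * A t + (1 - t) * B t) = 0 := by
    have e : ∀ t, t * A t + (1 - t) * B t = (t * (∑' n : ℤ, |(n : ℝ) + 1| * N (t + n)) +
        (1 - t) * (∑' n : ℤ, |(n : ℝ)| * N (t + n))) - 2 * (t * N t + (1 - t) * N (t - 1)) := by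
      intro t; simp only [hAdef, hBdef]; ring
    have cq : Continuous fun t => 2 * (t * N t + (1 - t) * N (t - 1)) := by fun_prop
    simp_rw [e]
    rw [intervalIntegral.integral_sub _ (cq.intervalIntegrable _ _), heq, hinv,
      intervalIntegral.integral_const_mul, hsplit, sub_self]
    have : ContinuousOn (fun t => (t * A t + (1 - t) * B t) + 2 * (t * N t + (1 - t) * N (t - 1)))
      (Set.uIcc 0 1) := by
      rw [Set.uIcc_of_le zero_le_one]; exact cD.add cq.continuousOn
    refine this.intervalIntegrable.congr fun t _ => ?_
    simp only [e]; ring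
  have hDz : ∀ t ∈ Set.Icc (0 : ℝ) 1, t * A t + (1 - t) * B t = 0 := by
    have hnn : ∀ t ∈ Set.Icc (0 : ℝ) 1, 0 ≤ t * A t + (1 - t) * B t := fun t ht =>
      add_nonneg (mul_nonneg ht.1 (hA0 t ht)) (mul_nonneg (by linarith [ht.2]) (hB0 t ht))
    intro t ht
    by_contra hne
    have := intervalIntegral.integral_pos zero_lt_one cD
      (fun x hx => hnn x ⟨hx.1.le, hx.2⟩) ⟨t, ht, lt_of_le_of_ne (hnn t ht) (Ne.symm hne)⟩
    linarith
  have hAB : ∀ t ∈ Set.Ioo (0 : ℝ) 1, A t = 0 ∧ B t = 0 := by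
    intro t ht
    have ht' : t ∈ Set.Icc (0 : ℝ) 1 := ⟨ht.1.le, ht.2.le⟩
    have h := hDz t ht'
    have ha := hA0 t ht'; have hb := hB0 t ht'
    have h1 := mul_nonneg ht'.1 ha
    have h2 := mul_nonneg (by linarith [ht.2] : 0 ≤ 1 - t) hb
    constructor
    · have : t * A t = 0 := by linarith
      exact (mul_eq_zero.1 this).resolve_left ht.1.ne'
    · have : (1 - t) * B t = 0 := by linarith
      exact (mul_eq_zero.1 this).resolve_left (by linarith [ht.2])
  have ext0 : ∀ F : ℝ → ℝ, ContinuousOn F (Set.Icc 0 1) → (∀ t ∈ Set.Ioo (0 : ℝ) 1, F t = 0) →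
      ∀ t ∈ Set.Icc (0 : ℝ) 1, F t = 0 := by
    intro F hF hz t ht
    have : Set.EqOn F (fun _ => 0) (Set.Icc 0 1) := by
      refine Set.EqOn.of_subset_closure (s := Set.Ioo 0 1) (fun t ht => hz t ht) hF
        continuousOn_const Set.Ioo_subset_Icc_self ?_
      rw [closure_Ioo (by norm_num)]
    exact this ht
  intro t ht
  constructor
  · have : A t = 0 := ext0 A cA (fun t ht => (hAB t ht).1) t ht
    rw [← sub_eq_zero.1 this]
    exact (smA t ht).hasSum
  · have : B t = 0 := ext0 B cB (fun t ht => (hAB t ht).2) t ht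
    rw [← sub_eq_zero.1 this]
    exact (smB t ht).hasSum

lemma iu_two_norm_le {E : Type*} [NormedAddCommGroup E] [NormedSpace ℝ E]
    (u : ℤ → E) (hu : HasSum u 0) (hs : Summable fun n => ‖u n‖) (m : ℤ) :
    2 * ‖u m‖ ≤ ∑' n, ‖u n‖ := by
  classical
  have h1 : HasSum (Function.update u m 0) (0 - u m + 0) := by
    have := hu.update m 0
    convert this using 1
  have h2 : HasSum (Function.update (fun n => ‖u n‖) m 0) (0 - ‖u m‖ + ∑' n, ‖u n‖) :=
    hs.hasSum.update m 0
  have e : (Function.update (fun n => ‖u n‖) m 0) = fun n => ‖Function.update u m 0 n‖ := by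
    ext n; by_cases h : n = m
    · subst h; simp
    · simp [h]
  rw [e] at h2
  have h3 := norm_tsum_le_tsum_norm h2.summable
  rw [h1.tsum_eq, h2.tsum_eq] at h3
  simp at h3
  linarith

theorem iu_core {E : Type*} [NormedAddCommGroup E] [NormedSpace ℝ E] (g : ℝ → E)
    (hc : Continuous g) (hS : ∀ x : ℝ, x ≠ 0 → ‖g (-1 / x)‖ = x ^ 4 * ‖g x‖)
    (h0 : ∀ t : ℝ, HasSum (fun n : ℤ => g (t + n)) 0)
    (h1 : ∀ t : ℝ, HasSum (fun n : ℤ => (n : ℝ) • g (t + n)) 0) : ∀ x, g x = 0 := by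
  obtain ⟨K, hK, hb⟩ := iu_decay g hc hS
  have h1' : ∀ t : ℝ, HasSum (fun n : ℤ => ((n : ℝ) + 1) • g (t + n)) 0 := by
    intro t
    have := (h1 t).add (h0 t)
    simpa [add_smul] using this
  have key := iu_key (N := fun x => ‖g x‖) hc.norm (fun x => norm_nonneg _) hK hb hS ?_ ?_
  rotate_left
  · intro t ht
    have h := iu_two_norm_le _ (h1' t) ?_ 0
    · simpa [norm_smul] using h
    · simp only [norm_smul, Real.norm_eq_abs]
      have sB := iu_summable K
      have sA : Summable (fun n : ℤ => K / |(n : ℝ) + 1| ^ 3) := by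
        have := (Equiv.addRight (1 : ℤ)).summable_iff.2 sB
        refine this.congr fun n => ?_
        simp
      refine Summable.of_nonneg_of_le (fun n => by positivity) (fun n => ?_) sA
      refine iu_bound (N := fun x => ‖g x‖) (fun _ => norm_nonneg _) hK hb _ _ ?_
      calc |(n : ℝ) + 1| = |(1 - t) + (t + n)| := by congr 1; ring
        _ ≤ |1 - t| + |t + n| := abs_add_le _ _
        _ ≤ _ := by gcongr; rw [abs_le]; constructor <;> linarith [ht.1, ht.2]
  · intro t ht
    have h := iu_two_norm_le _ (h1 t) ?_ (-1)
    · simpa [norm_smul, sub_eq_add_neg] using h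
    · simp only [norm_smul, Real.norm_eq_abs]
      refine Summable.of_nonneg_of_le (fun n => by positivity) (fun n => ?_) (iu_summable K)
      refine iu_bound (N := fun x => ‖g x‖) (fun _ => norm_nonneg _) hK hb _ _ ?_
      calc |(n : ℝ)| = |(- t) + (t + n)| := by congr 1; ring
        _ ≤ |- t| + |t + n| := abs_add_le _ _
        _ ≤ _ := by gcongr; rw [abs_le]; constructor <;> linarith [ht.1, ht.2]
  -- integers of absolute value at least two
  have hbig : ∀ m : ℤ, 2 ≤ |m| → g m = 0 := by
    intro m hm
    have hs := (key 0 (by simp)).2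
    simp only [zero_add, zero_sub] at hs
    have hN1 : ‖g 1‖ = ‖g (-1)‖ := by
      have := hS 1 one_ne_zero
      norm_num at this; exact this.symm
    have hm1 : m ≠ 1 := by rintro rfl; simp at hm
    have hm2 : m ≠ -1 := by rintro rfl; simp at hm
    have := sum_le_hasSum {1, -1, m} (fun n _ => by positivity) hs
    rw [Finset.sum_insert (by simp [Ne.symm hm1]), Finset.sum_insert (by simp [Ne.symm hm2]),
      Finset.sum_singleton] at this
    simp only [Int.cast_one, abs_one, Int.cast_neg, abs_neg, one_mul, hN1] at this
    have h3 : |(m : ℝ)| * ‖g m‖ ≤ 0 := by linarith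
    have h4 : (2 : ℝ) ≤ |(m : ℝ)| := by exact_mod_cast hm
    have h5 : ‖g m‖ ≤ 0 := by nlinarith [norm_nonneg (g m)]
    exact norm_le_zero_iff.1 h5
  have hprop : ∀ t ∈ Set.Icc (0 : ℝ) 1, g t = 0 → ∀ n : ℤ, g (t + n) = 0 := by
    intro t ht hz
    have hs := (key t ht).1
    rw [hz, norm_zero, mul_zero, hasSum_zero_iff_of_nonneg (fun n => by positivity)] at hs
    have h2 : ∀ n : ℤ, n ≠ -1 → g (t + n) = 0 := by
      intro n hn
      have := congrFun hs n
      simp only [Pi.zero_apply, mul_eq_zero, abs_eq_zero, norm_eq_zero] at this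
      refine this.resolve_left fun h => hn ?_
      have : ((n + 1 : ℤ) : ℝ) = 0 := by push_cast; exact h
      have : n + 1 = 0 := by exact_mod_cast this
      omega
    intro n
    by_cases hn : n = -1
    · subst hn
      have := hasSum_single (f := fun n : ℤ => g (t + n)) (-1) (fun n hn => h2 n hn)
      exact this.unique (h0 t)
    · exact h2 n hn
  have hrat : ∀ d : ℕ, ∀ a : ℤ, 0 < d → ¬ ((d : ℤ) ∣ a) → g ((a : ℝ) / d) = 0 := by
    intro d
    induction d using Nat.strong_induction_on with
    | _ d ih =>
      intro a hd hda
      have hd' : (0 : ℤ) < d := by exact_mod_cast hd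
      have hdR : (0 : ℝ) < d := by exact_mod_cast hd
      obtain ⟨p, hp⟩ : ∃ p : ℕ, a % d = p := ⟨(a % d).toNat, by
        rw [Int.toNat_of_nonneg (Int.emod_nonneg _ hd'.ne')]⟩
      have hp0 : 0 < p := by
        rcases Nat.eq_zero_or_pos p with h | h
        · exact absurd (Int.dvd_of_emod_eq_zero (by rw [hp, h]; rfl)) hda
        · exact h
      have hpd : p < d := by
        have := Int.emod_lt_of_pos a hd'
        rw [hp] at this; exact_mod_cast this
      have hpR : (0 : ℝ) < p := by exact_mod_cast hp0
      have hpdR : (p : ℝ) < d := by exact_mod_cast hpd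
      have hz : g (-1 / ((p : ℝ) / d)) = 0 := by
        by_cases hdiv : p ∣ d
        · obtain ⟨k, hk⟩ := hdiv
          have : -1 / ((p : ℝ) / d) = ((-(k : ℤ) : ℤ) : ℝ) := by
            rw [hk]; push_cast; field_simp
          rw [this]
          apply hbig
          have : 2 ≤ k := by
            by_contra h
            have : k = 0 ∨ k = 1 := by omega
            rcases this with rfl | rfl <;> omega
          rw [abs_neg, Nat.abs_cast]; exact_mod_cast this
        · have := ih p hpd (-(d : ℤ)) hp0 (by
            rw [dvd_neg]; exact_mod_cast hdiv)
          convert this using 2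
          push_cast; field_simp
      have hz2 : g ((p : ℝ) / d) = 0 := by
        have h := hS ((p : ℝ) / d) (by positivity)
        rw [hz, norm_zero] at h
        have h' := (mul_eq_zero.1 h.symm).resolve_left (by positivity)
        exact norm_eq_zero.1 h'
      have := hprop _ ⟨by positivity, by rw [div_le_one hdR]; exact hpdR.le⟩ hz2 (a / d)
      convert this using 2
      have e := Int.emod_add_mul_ediv a d
      rw [hp] at e
      have eR : (p : ℝ) + d * ((a / d : ℤ) : ℝ) = a := by exact_mod_cast e
      rw [← eR]; field_simp
  intro y
  have hlim : Filter.Tendsto (fun k : ℕ => (((2 * ⌊((k : ℝ) + 1) * y⌋ + 1 : ℤ) : ℝ) / ((2 * (k + 1) : ℕ) : ℝ)))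
      Filter.atTop (nhds y) := by
    rw [tendsto_iff_norm_sub_tendsto_zero]
    refine squeeze_zero (fun _ => norm_nonneg _) (fun k => ?_) (tendsto_one_div_add_atTop_nhds_zero_nat (𝕜 := ℝ))
    have hk : (0 : ℝ) < (k : ℝ) + 1 := by positivity
    have f1 := Int.floor_le (((k : ℝ) + 1) * y)
    have f2 := Int.lt_floor_add_one (((k : ℝ) + 1) * y)
    have e : ((2 * ⌊((k : ℝ) + 1) * y⌋ + 1 : ℤ) : ℝ) / ((2 * (k + 1) : ℕ) : ℝ) - y
      = (⌊((k : ℝ) + 1) * y⌋ + 1 / 2 - ((k : ℝ) + 1) * y) / ((k : ℝ) + 1) := by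
      push_cast; field_simp
    rw [e, norm_div, Real.norm_eq_abs, Real.norm_eq_abs, abs_of_pos hk]
    gcongr
    rw [abs_le]; constructor <;> linarith
  have hlim2 := (hc.tendsto y).comp hlim
  have : (g ∘ fun k : ℕ => (((2 * ⌊((k : ℝ) + 1) * y⌋ + 1 : ℤ) : ℝ) / ((2 * (k + 1) : ℕ) : ℝ))) = fun _ => 0 := by
    ext k
    simp only [Function.comp]
    apply hrat _ _ (by positivity)
    rintro ⟨c, hcc⟩
    push_cast at hcc
    have : 2 * ⌊((k : ℝ) + 1) * y⌋ + 1 = 2 * (((k : ℤ) + 1) * c) := by rw [hcc]; ring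
    omega
  rw [this] at hlim2
  exact tendsto_nhds_unique hlim2 tendsto_const_nhds

lemma iu_hasSum_of_fourier_zero (q : ℝ → ℂ) (hc : Continuous q) {K : ℝ} (hK : 0 ≤ K)
    (hb : ∀ x, ‖q x‖ ≤ K / (1 + |x|) ^ 3) (hF : ∀ n : ℤ, FourierTransform.fourier q (n : ℝ) = 0) (t : ℝ) :
    HasSum (fun n : ℤ => q (t + n)) 0 := by
  have hO : q =O[Filter.cocompact ℝ] fun x => |x| ^ (-(2 : ℝ)) := by
    refine Asymptotics.IsBigO.of_bound K ?_
    have : ∀ᶠ x : ℝ in Filter.cocompact ℝ, x ≠ 0 := by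
      have := (isCompact_singleton (x := (0 : ℝ))).compl_mem_cocompact
      filter_upwards [this] with x hx using hx
    filter_upwards [this] with x hx
    have hx' : 0 < |x| := abs_pos.2 hx
    refine (hb x).trans ?_
    rw [Real.rpow_neg (abs_nonneg _), Real.norm_of_nonneg (show (0 : ℝ) ≤ (|x| ^ (2 : ℝ))⁻¹ by positivity),
      ← div_eq_mul_inv]
    have : |x| ^ (2 : ℝ) = |x| ^ 2 := by exact_mod_cast Real.rpow_natCast |x| 2
    rw [this]
    gcongr
    nlinarith [pow_pos hx' 3, pow_pos hx' 2]
  have hs : Summable fun n : ℤ => FourierTransform.fourier q (n : ℝ) := by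
    simp only [hF]; exact summable_zero
  have h := Real.tsum_eq_tsum_fourier_of_rpow_decay_of_summable hc (by norm_num : (1 : ℝ) < 2) hO hs t
  simp only [hF, zero_mul, tsum_zero] at h
  rw [← h]
  refine Summable.hasSum ?_
  refine Summable.of_norm ?_
  -- summability
  have hcomp : ∀ n : ℤ, ‖q (t + n)‖ ≤ K * (1 + |t|) ^ 3 * (1 / (1 + |(n : ℝ)|) ^ 2) := by
    intro n
    refine (hb _).trans ?_
    have h1 : 1 + |(n : ℝ)| ≤ (1 + |t|) * (1 + |t + n|) := by
      have : |(n : ℝ)| ≤ |t| + |t + n| := by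
        calc |(n : ℝ)| = |(- t) + (t + n)| := by congr 1; ring
          _ ≤ |- t| + |t + n| := abs_add_le _ _
          _ = _ := by rw [abs_neg]
      nlinarith [abs_nonneg t, abs_nonneg (t + n)]
    have h2 : (1 + |(n : ℝ)|) ^ 2 ≤ (1 + |(n : ℝ)|) ^ 3 :=
      pow_le_pow_right₀ (by linarith [abs_nonneg (n : ℝ)]) (by norm_num)
    have h3 : (1 + |(n : ℝ)|) ^ 3 ≤ ((1 + |t|) * (1 + |t + n|)) ^ 3 := by gcongr
    rw [mul_pow] at h3
    rw [div_le_iff₀ (by positivity), mul_one_div, div_mul_eq_mul_div, le_div_iff₀ (by positivity), mul_assoc]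
    gcongr
    linarith
  refine Summable.of_nonneg_of_le (fun _ => norm_nonneg _) hcomp (Summable.mul_left _ ?_)
  have h4 := ((Real.summable_one_div_int_pow (p := 2)).2 (by norm_num)).abs
  have h5 : Summable (fun n : ℤ => Function.update (fun n : ℤ => |1 / (n : ℝ) ^ 2|) 0 1 n) :=
    (h4.hasSum.update 0 1).summable
  refine Summable.of_nonneg_of_le (fun _ => by positivity) (fun n => ?_) h5
  by_cases hn : n = 0
  · subst hn; simp
  · rw [Function.update_of_ne hn, abs_of_nonneg (show (0 : ℝ) ≤ 1 / (n : ℝ) ^ 2 by positivity), ← sq_abs (n : ℝ)]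
    have : 0 < |(n : ℝ)| := by positivity
    gcongr
    linarith

lemma iu_poisson (q : ℝ → ℂ) (hc : Continuous q) {K : ℝ} (hK : 0 ≤ K)
    (hb : ∀ x, ‖q x‖ ≤ K / (1 + |x|) ^ 4) (hF : ∀ n : ℤ, FourierTransform.fourier q (n : ℝ) = 0)
    (hF' : ∀ n : ℤ, deriv (FourierTransform.fourier q) (n : ℝ) = 0) (t : ℝ) :
    HasSum (fun n : ℤ => q (t + n)) 0 ∧ HasSum (fun n : ℤ => (n : ℝ) • q (t + n)) 0 := by
  have hb3 : ∀ x, ‖q x‖ ≤ K / (1 + |x|) ^ 3 := fun x => (hb x).trans (by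
    gcongr
    · linarith [abs_nonneg x]
    · norm_num)
  have hbx : ∀ x : ℝ, ‖x • q x‖ ≤ K / (1 + |x|) ^ 3 := by
    intro x
    rw [norm_smul, Real.norm_eq_abs]
    calc |x| * ‖q x‖ ≤ (1 + |x|) * (K / (1 + |x|) ^ 4) :=
          mul_le_mul (by linarith) (hb x) (norm_nonneg _) (by positivity)
      _ = K / (1 + |x|) ^ 3 := by field_simp
  have hcx : Continuous (fun x : ℝ => x • q x) := by fun_prop
  have hbig : ∀ p : ℝ → ℂ, Continuous p → (∀ x, ‖p x‖ ≤ K / (1 + |x|) ^ 3) → Integrable p := by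
    intro p hp hpb
    refine Integrable.mono' ((integrable_inv_one_add_sq).const_mul K)
      hp.aestronglyMeasurable (Filter.Eventually.of_forall fun x => (hpb x).trans ?_)
    rw [← div_eq_mul_inv]
    gcongr
    rw [← sq_abs]
    have : 0 ≤ |x| := abs_nonneg x
    ring_nf
    nlinarith [pow_nonneg this 3, pow_nonneg this 2]
  have hFx : ∀ n : ℤ, FourierTransform.fourier (fun x : ℝ => x • q x) (n : ℝ) = 0 := by
    intro n
    have h := (Real.hasDerivAt_fourier (hbig q hc hb3) (hbig _ hcx hbx) (n : ℝ)).deriv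
    rw [hF' n] at h
    have e : (fun x : ℝ => (-2 * (Real.pi : ℂ) * Complex.I * (x : ℂ)) • q x)
        = fun x : ℝ => (-2 * (Real.pi : ℂ) * Complex.I) • (x • q x) := by
      ext x; simp; ring
    rw [e] at h
    have e2 : FourierTransform.fourier (fun x : ℝ => (-2 * (Real.pi : ℂ) * Complex.I) • (x • q x)) (n : ℝ)
        = (-2 * (Real.pi : ℂ) * Complex.I) • FourierTransform.fourier (fun x : ℝ => x • q x) (n : ℝ) := by
      rw [Real.fourier_eq, Real.fourier_eq, ← integral_smul]
      congr 1; ext v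
      rw [smul_comm]
    rw [e2] at h
    refine (smul_eq_zero.1 h.symm).resolve_left ?_
    have := Real.pi_ne_zero
    simp [this]
  have s1 := iu_hasSum_of_fourier_zero q hc hK hb3 hF t
  have s2 := iu_hasSum_of_fourier_zero _ hcx hK hbx hFx t
  refine ⟨s1, ?_⟩
  have := s2.sub (s1.const_smul t)
  simp only [smul_zero, sub_zero] at this
  refine this.congr_fun ?_ |> id
  intro n
  rw [← sub_smul]; congr 1; ring

/-- Integral of `f` against the Gaussian `e^{π i t |x|²}` with real parameter `t`. -/
def iuG (f : SchwartzMap (EuclideanSpace ℝ (Fin 8)) ℂ) (t : ℝ) : ℂ :=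
  ∫ x, Complex.exp (((Real.pi * t * ‖x‖ ^ 2 : ℝ) : ℂ) * Complex.I) * f x

lemma iuG_continuous (f : SchwartzMap (EuclideanSpace ℝ (Fin 8)) ℂ) : Continuous (iuG f) := by
  unfold iuG
  refine continuous_of_dominated (bound := fun x => ‖f x‖) (fun t => ?_) (fun t => ?_)
    f.integrable.norm ?_
  · have := f.continuous
    exact (by fun_prop : Continuous _).aestronglyMeasurable
  · refine Filter.Eventually.of_forall fun x => ?_
    rw [norm_mul, Complex.norm_exp_ofReal_mul_I, one_mul]
  · refine Filter.Eventually.of_forall fun x => ?_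
    fun_prop

lemma iu_parseval (f : SchwartzMap (EuclideanSpace ℝ (Fin 8)) ℂ) {b : ℂ} (hb : 0 < b.re) :
    ∫ x, Complex.exp (-b * (‖x‖ : ℂ) ^ 2) * FT f x =
    ∫ x, (((Real.pi : ℂ) / b) ^ 4 * Complex.exp (-(Real.pi : ℂ) ^ 2 * (‖x‖ : ℂ) ^ 2 / b)) * f x := by
  have hi : Integrable (fun v : EuclideanSpace ℝ (Fin 8) => Complex.exp (-b * (‖v‖ : ℂ) ^ 2)) := by
    simpa using GaussianFourier.integrable_cexp_neg_mul_sq_norm_add hb 0 (0 : EuclideanSpace ℝ (Fin 8))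
  have h := VectorFourier.integral_bilin_fourierIntegral_eq_flip (ContinuousLinearMap.mul ℂ ℂ)
    (L := innerₗ (EuclideanSpace ℝ (Fin 8))) (μ := volume) (ν := volume)
    Real.continuous_fourierChar continuous_inner hi f.integrable
  have e1 : ∀ x, VectorFourier.fourierIntegral Real.fourierChar volume
      (innerₗ (EuclideanSpace ℝ (Fin 8))) (fun v : EuclideanSpace ℝ (Fin 8) =>
        Complex.exp (-b * (‖v‖ : ℂ) ^ 2)) x =
      ((Real.pi : ℂ) / b) ^ 4 * Complex.exp (-(Real.pi : ℂ) ^ 2 * (‖x‖ : ℂ) ^ 2 / b) := by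
    intro x
    have := fourier_gaussian_innerProductSpace hb x
    have e4 : ((Module.finrank ℝ (EuclideanSpace ℝ (Fin 8)) : ℂ) / 2) = ((4 : ℕ) : ℂ) := by
      simp; norm_num
    rw [e4, Complex.cpow_natCast] at this
    exact this
  have e2 : ∀ x, VectorFourier.fourierIntegral Real.fourierChar volume
      (innerₗ (EuclideanSpace ℝ (Fin 8))).flip f x = FT f x := by
    intro x
    rw [flip_innerₗ]
    rfl
  simp only [e1, e2, ContinuousLinearMap.mul_apply'] at h
  exact h.symm

lemma iuG_FT (f : SchwartzMap (EuclideanSpace ℝ (Fin 8)) ℂ) {x : ℝ} (hx : x ≠ 0) :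
    iuG (FT f) (-1 / x) = (x : ℂ) ^ 4 * iuG f x := by
  have hxC : (x : ℂ) ≠ 0 := by exact_mod_cast hx
  have hpi : (Real.pi : ℂ) ≠ 0 := by exact_mod_cast Real.pi_ne_zero
  let b : ℝ → ℂ := fun δ => (Real.pi : ℂ) * ((δ : ℂ) + Complex.I / x)
  have hbre : ∀ δ, (b δ).re = Real.pi * δ := by
    intro δ
    have : Complex.I / (x : ℂ) = ((1 / x : ℝ) : ℂ) * Complex.I := by push_cast; field_simp
    simp only [b, this]
    simp
  have hb0 : b 0 ≠ 0 := by
    simp only [b, Complex.ofReal_zero, zero_add]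
    exact mul_ne_zero hpi (div_ne_zero Complex.I_ne_zero hxC)
  have hbc : Continuous b := by fun_prop
  have hbt : Filter.Tendsto b (nhdsWithin 0 (Set.Ioi 0)) (nhds (b 0)) :=
    hbc.continuousAt.tendsto.mono_left nhdsWithin_le_nhds
  have L1 : Filter.Tendsto (fun δ => ∫ y, Complex.exp (-(b δ) * (‖y‖ : ℂ) ^ 2) * FT f y)
      (nhdsWithin 0 (Set.Ioi 0)) (nhds (∫ y, Complex.exp (-(b 0) * (‖y‖ : ℂ) ^ 2) * FT f y)) := by
    refine tendsto_integral_filter_of_dominated_convergence (fun y => ‖FT f y‖) ?_ ?_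
      (FT f).integrable.norm ?_
    · refine Filter.Eventually.of_forall fun δ => ?_
      have := (FT f).continuous
      exact (by fun_prop : Continuous _).aestronglyMeasurable
    · filter_upwards [self_mem_nhdsWithin] with δ hδ
      refine Filter.Eventually.of_forall fun y => ?_
      rw [norm_mul, Complex.norm_exp]
      have e : (-(b δ) * (‖y‖ : ℂ) ^ 2).re = -(Real.pi * δ * ‖y‖ ^ 2) := by
        rw [← Complex.ofReal_pow, Complex.re_mul_ofReal, Complex.neg_re, hbre]; ring
      rw [e]
      refine mul_le_of_le_one_left (norm_nonneg _) (Real.exp_le_one_iff.2 ?_)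
      have : 0 < δ := hδ
      have := Real.pi_pos
      simp only [Left.neg_nonpos_iff]; positivity
    · refine Filter.Eventually.of_forall fun y => ?_
      refine Filter.Tendsto.mul_const _ ?_
      exact (Complex.continuous_exp.tendsto _).comp ((hbt.neg).mul_const _)
  have L2 : Filter.Tendsto (fun δ => ∫ y, (((Real.pi : ℂ) / b δ) ^ 4 *
        Complex.exp (-(Real.pi : ℂ) ^ 2 * (‖y‖ : ℂ) ^ 2 / b δ)) * f y)
      (nhdsWithin 0 (Set.Ioi 0)) (nhds (∫ y, (((Real.pi : ℂ) / b 0) ^ 4 *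
        Complex.exp (-(Real.pi : ℂ) ^ 2 * (‖y‖ : ℂ) ^ 2 / b 0)) * f y)) := by
    have hq : Filter.Tendsto (fun δ => ((Real.pi : ℂ) / b δ) ^ 4) (nhdsWithin 0 (Set.Ioi 0))
        (nhds (((Real.pi : ℂ) / b 0) ^ 4)) := (tendsto_const_nhds.div hbt hb0).pow 4
    have hqb : ∀ᶠ δ in nhdsWithin (0 : ℝ) (Set.Ioi 0), ‖((Real.pi : ℂ) / b δ) ^ 4‖ ≤
        ‖((Real.pi : ℂ) / b 0) ^ 4‖ + 1 :=
      (hq.norm.eventually (gt_mem_nhds (lt_add_one _))).mono fun _ h => h.le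
    refine tendsto_integral_filter_of_dominated_convergence
      (fun y => (‖((Real.pi : ℂ) / b 0) ^ 4‖ + 1) * ‖f y‖) ?_ ?_
      (f.integrable.norm.const_mul _) ?_
    · refine Filter.Eventually.of_forall fun δ => ?_
      have := f.continuous
      exact (by fun_prop : Continuous _).aestronglyMeasurable
    · filter_upwards [self_mem_nhdsWithin, hqb] with δ hδ hq
      refine Filter.Eventually.of_forall fun y => ?_
      rw [norm_mul, norm_mul, Complex.norm_exp]
      have e : (-(Real.pi : ℂ) ^ 2 * (‖y‖ : ℂ) ^ 2 / b δ).re =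
          -(Real.pi ^ 2 * ‖y‖ ^ 2 * ((Real.pi * δ) / Complex.normSq (b δ))) := by
        have : (-(Real.pi : ℂ) ^ 2 * (‖y‖ : ℂ) ^ 2 / b δ) =
          ((-(Real.pi ^ 2 * ‖y‖ ^ 2) : ℝ) : ℂ) * (b δ)⁻¹ := by push_cast; ring
        rw [this, Complex.re_ofReal_mul, Complex.inv_re, hbre]; ring
      rw [e]
      have h1 : Real.exp (-(Real.pi ^ 2 * ‖y‖ ^ 2 * ((Real.pi * δ) / Complex.normSq (b δ)))) ≤ 1 := by
        refine Real.exp_le_one_iff.2 ?_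
        have : 0 < δ := hδ
        have := Real.pi_pos
        have := Complex.normSq_nonneg (b δ)
        simp only [Left.neg_nonpos_iff]; positivity
      refine mul_le_mul_of_nonneg_right ?_ (norm_nonneg _)
      calc _ ≤ ‖((Real.pi : ℂ) / b δ) ^ 4‖ * 1 := by gcongr
        _ ≤ _ := by rw [mul_one]; exact hq
    · refine Filter.Eventually.of_forall fun y => ?_
      refine Filter.Tendsto.mul_const _ (hq.mul ?_)
      exact (Complex.continuous_exp.tendsto _).comp (tendsto_const_nhds.div hbt hb0)
  have hEq : ∀ᶠ δ in nhdsWithin (0 : ℝ) (Set.Ioi 0),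
      ∫ y, Complex.exp (-(b δ) * (‖y‖ : ℂ) ^ 2) * FT f y = ∫ y, (((Real.pi : ℂ) / b δ) ^ 4 *
        Complex.exp (-(Real.pi : ℂ) ^ 2 * (‖y‖ : ℂ) ^ 2 / b δ)) * f y := by
    filter_upwards [self_mem_nhdsWithin] with δ hδ
    apply iu_parseval
    rw [hbre]
    exact mul_pos Real.pi_pos hδ
  have := tendsto_nhds_unique (L1.congr' hEq) L2
  have hb0' : b 0 = (Real.pi : ℂ) * Complex.I / x := by simp only [b]; push_cast; ring
  have hq4 : ((Real.pi : ℂ) / b 0) ^ 4 = (x : ℂ) ^ 4 := by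
    rw [hb0']
    have : (Real.pi : ℂ) / ((Real.pi : ℂ) * Complex.I / x) = x / Complex.I := by
      field_simp
    rw [this, div_pow, Complex.I_pow_four, div_one]
  unfold iuG
  rw [← integral_const_mul]
  rw [hq4] at this
  convert this using 1
  · congr 1; ext y; congr 2
    rw [hb0']; push_cast; field_simp
  · congr 1; ext y
    have e : ((Real.pi * x * ‖y‖ ^ 2 : ℝ) : ℂ) * Complex.I =
        -(Real.pi : ℂ) ^ 2 * (‖y‖ : ℂ) ^ 2 / b 0 := by
      rw [eq_div_iff hb0, hb0']
      push_cast
      field_simp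
      rw [Complex.I_sq]; ring
    rw [e, mul_assoc]

lemma iuG_FT' (f : SchwartzMap (EuclideanSpace ℝ (Fin 8)) ℂ) {x : ℝ} (hx : x ≠ 0) :
    iuG f (-1 / x) = (x : ℂ) ^ 4 * iuG (FT f) x := by
  have h := iuG_FT f (x := -1 / x) (by positivity)
  have e : -1 / (-1 / x) = x := by field_simp
  have hxC : (x : ℂ) ≠ 0 := by exact_mod_cast hx
  rw [e] at h
  rw [h]; push_cast; field_simp

lemma iu_FT_radial (f : SchwartzMap (EuclideanSpace ℝ (Fin 8)) ℂ) (hf : IsRadial f) :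
    IsRadial (FT f) := by
  intro x y hxy
  have h := Submodule.reflection_sub hxy
  set A := (Submodule.reflection (Submodule.span ℝ {x - y})ᗮ) with hA
  have h2 := Real.fourier_comp_linearIsometry A (f : EuclideanSpace ℝ (Fin 8) → ℂ) x
  have h3 : (f : EuclideanSpace ℝ (Fin 8) → ℂ) ∘ A = f := by
    ext v; exact hf _ _ (A.norm_map v)
  rw [h3, h] at h2
  exact h2

lemma iu_norm_e (r : ℝ) (hr : 0 ≤ r) : ‖r • e₁‖ = r := by
  simp [e₁, norm_smul, abs_of_nonneg hr]

/-- The function whose inverse Fourier transform is `iuG f`. -/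
def iuH (f : SchwartzMap (EuclideanSpace ℝ (Fin 8)) ℂ) (u : ℝ) : ℂ :=
  ((8 * volume.real (Metric.ball (0 : EuclideanSpace ℝ (Fin 8)) 1) : ℝ) : ℂ) *
    (((2 * max u 0) ^ 3 : ℝ) * radVal f (Real.sqrt (2 * u)))

lemma iuH_continuous (f : SchwartzMap (EuclideanSpace ℝ (Fin 8)) ℂ) : Continuous (iuH f) := by
  unfold iuH radVal
  have := f.continuous
  fun_prop

lemma iuH_integrable (f : SchwartzMap (EuclideanSpace ℝ (Fin 8)) ℂ) : Integrable (iuH f) := by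
  unfold iuH
  refine Integrable.const_mul ?_ _
  obtain ⟨C, hC0, hC⟩ := f.decay 6 0
  obtain ⟨D, hD0, hD⟩ := f.decay 10 0
  refine Integrable.mono' ((integrable_inv_one_add_sq).const_mul (C + D)) ?_
    (Filter.Eventually.of_forall fun u => ?_)
  · have := f.continuous
    unfold radVal
    exact (by fun_prop : Continuous _).aestronglyMeasurable
  rw [← div_eq_mul_inv, le_div_iff₀ (by positivity)]
  rcases le_or_gt u 0 with hu | hu
  · rw [max_eq_right hu]; simp; positivity
  · rw [max_eq_left hu.le, norm_mul, Complex.norm_real, Real.norm_of_nonneg (by positivity)]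
    have h1 := hC (Real.sqrt (2 * u) • e₁)
    have h2 := hD (Real.sqrt (2 * u) • e₁)
    rw [iu_norm_e _ (Real.sqrt_nonneg _), norm_iteratedFDeriv_zero] at h1 h2
    have e6 : Real.sqrt (2 * u) ^ 6 = (2 * u) ^ 3 := by
      rw [show 6 = 2 * 3 from rfl, pow_mul, Real.sq_sqrt (by positivity)]
    have e10 : Real.sqrt (2 * u) ^ 10 = (2 * u) ^ 5 := by
      rw [show 10 = 2 * 5 from rfl, pow_mul, Real.sq_sqrt (by positivity)]
    rw [e6] at h1
    rw [e10] at h2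
    have h3 : 0 ≤ u ^ 5 * ‖f (Real.sqrt (2 * u) • e₁)‖ := by positivity
    unfold radVal
    nlinarith

lemma iuG_eq (f : SchwartzMap (EuclideanSpace ℝ (Fin 8)) ℂ) (hf : IsRadial f) (t : ℝ) :
    FourierTransformInv.fourierInv (iuH f) t = iuG f t := by
  set c : ℝ := 8 * volume.real (Metric.ball (0 : EuclideanSpace ℝ (Fin 8)) 1) with hc
  have h1 : iuG f t = ∫ x : EuclideanSpace ℝ (Fin 8),
      (fun r : ℝ => Complex.exp (((Real.pi * t * r ^ 2 : ℝ) : ℂ) * Complex.I) * radVal f r) ‖x‖ := by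
    unfold iuG
    congr 1; ext x
    simp only
    congr 1
    exact hf _ _ (by rw [iu_norm_e _ (norm_nonneg _)])
  have hpol := integral_fun_norm_addHaar (volume : Measure (EuclideanSpace ℝ (Fin 8)))
    (fun r : ℝ => Complex.exp (((Real.pi * t * r ^ 2 : ℝ) : ℂ) * Complex.I) * radVal f r)
  rw [h1, hpol]
  have hfin : Module.finrank ℝ (EuclideanSpace ℝ (Fin 8)) = 8 := by simp
  rw [hfin]
  let q : ℝ → ℂ := fun y => ((y ^ 3 / 2 : ℝ) : ℂ) *
    (Complex.exp (((Real.pi * t * y : ℝ) : ℂ) * Complex.I) * radVal f (Real.sqrt y))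
  have h2 : ∫ y in Set.Ioi (0 : ℝ), y ^ (8 - 1) •
      (Complex.exp (((Real.pi * t * y ^ 2 : ℝ) : ℂ) * Complex.I) * radVal f y) =
      ∫ y in Set.Ioi (0 : ℝ), q y := by
    rw [← integral_comp_rpow_Ioi_of_pos (g := q) (p := 2) (by norm_num)]
    refine setIntegral_congr_fun measurableSet_Ioi fun y hy => ?_
    have hy' : (0 : ℝ) < y := hy
    have e1 : y ^ (2 : ℝ) = y ^ 2 := by exact_mod_cast Real.rpow_natCast y 2
    have e2 : y ^ ((2 : ℝ) - 1) = y := by norm_num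
    simp only [q]
    rw [e1, e2, Real.sqrt_sq hy'.le]
    simp only [Complex.real_smul]
    push_cast
    ring
  have h3 : ∫ y in Set.Ioi (0 : ℝ), q y = (2 : ℝ) • ∫ u in Set.Ioi (0 : ℝ), q (2 * u) := by
    rw [integral_comp_mul_left_Ioi q 0 (by norm_num : (0 : ℝ) < 2), mul_zero, smul_smul]
    norm_num
  rw [h2, h3, Real.fourierInv_eq']
  have h4 : ∫ v : ℝ, Complex.exp (((2 * Real.pi * inner ℝ v t : ℝ) : ℂ) * Complex.I) • iuH f v
      = ∫ v in Set.Ioi (0 : ℝ), Complex.exp (((2 * Real.pi * inner ℝ v t : ℝ) : ℂ) * Complex.I) • iuH f v := by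
    symm
    refine setIntegral_eq_integral_of_forall_compl_eq_zero fun v hv => ?_
    have hv' : v ≤ 0 := by simpa using hv
    unfold iuH
    rw [max_eq_right hv']; simp
  rw [h4, ← integral_smul, ← integral_smul, nsmul_eq_mul, ← integral_const_mul]
  refine setIntegral_congr_fun measurableSet_Ioi fun v hv => ?_
  have hv' : (0 : ℝ) < v := hv
  simp only [q, iuH]
  rw [max_eq_left hv'.le]
  have e : (2 * Real.pi * inner ℝ v t : ℝ) = Real.pi * t * (2 * v) := by
    simp; ring
  rw [e]
  simp only [nsmul_eq_mul, Complex.real_smul, smul_eq_mul]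
  push_cast
  ring

lemma iu_fourier_eq (f : SchwartzMap (EuclideanSpace ℝ (Fin 8)) ℂ) (hf : IsRadial f)
    (hi : Integrable (iuG f)) : FourierTransform.fourier (iuG f) = iuH f := by
  have e : FourierTransformInv.fourierInv (iuH f) = iuG f := funext fun t => iuG_eq f hf t
  rw [← e]
  refine (iuH_continuous f).fourier_fourierInv_eq (iuH_integrable f) ?_
  have : FourierTransform.fourier (iuH f) = fun x => iuG f (-x) := by
    ext x
    rw [← e, Real.fourierInv_eq_fourier_neg, neg_neg]
  rw [this]
  exact hi.comp_neg

lemma iuH_zero (f : SchwartzMap (EuclideanSpace ℝ (Fin 8)) ℂ)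
    (h₁ : ∀ n : ℕ, 1 ≤ n → radVal f (Real.sqrt (2 * n)) = 0) (n : ℤ) : iuH f n = 0 := by
  unfold iuH
  rcases le_or_gt n 0 with hn | hn
  · have : (n : ℝ) ≤ 0 := by exact_mod_cast hn
    rw [max_eq_right this]; simp
  · obtain ⟨m, rfl⟩ := Int.eq_ofNat_of_zero_le hn.le
    have := h₁ m (by omega)
    rw [Int.cast_natCast, this, mul_zero, mul_zero]

lemma iuH_deriv (f : SchwartzMap (EuclideanSpace ℝ (Fin 8)) ℂ)
    (h₁ : ∀ n : ℕ, 1 ≤ n → radVal f (Real.sqrt (2 * n)) = 0)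
    (h₂ : ∀ n : ℕ, 1 ≤ n → radDeriv f (Real.sqrt (2 * n)) = 0)
    (hd : Differentiable ℝ (iuH f)) (n : ℤ) : deriv (iuH f) n = 0 := by
  rcases le_or_gt n 0 with hn | hn
  · have hn' : (n : ℝ) ≤ 0 := by exact_mod_cast hn
    have h1 : HasDerivWithinAt (iuH f) (deriv (iuH f) n) (Set.Iic (n : ℝ)) n :=
      (hd n).hasDerivAt.hasDerivWithinAt
    have hz : ∀ u ∈ Set.Iic (n : ℝ), iuH f u = 0 := by
      intro u hu
      have hu' : u ≤ 0 := le_trans hu hn'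
      unfold iuH
      rw [max_eq_right hu']; simp
    have h2 : HasDerivWithinAt (iuH f) 0 (Set.Iic (n : ℝ)) n :=
      (hasDerivWithinAt_const (n : ℝ) (Set.Iic (n : ℝ)) (0 : ℂ)).congr hz (hz n (by simp))
    exact (uniqueDiffWithinAt_Iic (n : ℝ)).eq_deriv _ h1 h2
  · obtain ⟨m, rfl⟩ := Int.eq_ofNat_of_zero_le hn.le
    have hm : 1 ≤ m := by omega
    have hmR : (0 : ℝ) < m := by exact_mod_cast hm
    have hr : HasDerivAt (fun t : ℝ => f (t • e₁)) 0 (Real.sqrt (2 * m)) := by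
      have hdf : DifferentiableAt ℝ (fun t : ℝ => f (t • e₁)) (Real.sqrt (2 * m)) := by
        have := f.differentiable
        fun_prop
      have := hdf.hasDerivAt
      rwa [show deriv (fun t : ℝ => f (t • e₁)) (Real.sqrt (2 * m)) = 0 from h₂ m hm] at this
    have hs : HasDerivAt (fun u : ℝ => Real.sqrt (2 * u)) (2 * 1 / (2 * Real.sqrt (2 * m))) (m : ℝ) :=
      ((hasDerivAt_id (m : ℝ)).const_mul 2).sqrt (by simp; positivity)
    have hcomp : HasDerivAt (fun u : ℝ => radVal f (Real.sqrt (2 * u))) 0 (m : ℝ) := by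
      have := HasDerivAt.scomp (m : ℝ) hr hs
      rw [smul_zero] at this
      exact this
    have hp : HasDerivAt (fun u : ℝ => (((2 * u) ^ 3 : ℝ) : ℂ)) (((3 * (2 * (m : ℝ)) ^ 2 * (2 * 1) : ℝ)) : ℂ) (m : ℝ) := by
      have := (((hasDerivAt_id (m : ℝ)).const_mul 2).pow 3).ofReal_comp
      simpa using this
    have hall := (hp.mul hcomp).const_mul
      (((8 * volume.real (Metric.ball (0 : EuclideanSpace ℝ (Fin 8)) 1) : ℝ) : ℂ))
    rw [h₁ m hm, mul_zero, mul_zero, add_zero, mul_zero] at hall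
    have hev : iuH f =ᶠ[nhds (m : ℝ)] fun u => (((8 * volume.real (Metric.ball (0 : EuclideanSpace ℝ (Fin 8)) 1) : ℝ) : ℂ)) *
        ((((2 * u) ^ 3 : ℝ) : ℂ) * radVal f (Real.sqrt (2 * u))) := by
      filter_upwards [lt_mem_nhds hmR] with u hu
      unfold iuH
      rw [max_eq_left (le_of_lt hu)]
    have := (hall.congr_of_eventuallyEq hev).deriv
    simpa using this

lemma iu_integrable_of_decay (q : ℝ → ℂ) (hq : Continuous q) {K : ℝ} (hK : 0 ≤ K)
    (hb : ∀ x, ‖q x‖ ≤ K / (1 + |x|) ^ 4) :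
    Integrable q ∧ Integrable (fun x : ℝ => x • q x) := by
  have hi : ∀ p : ℝ → ℂ, Continuous p → (∀ x, ‖p x‖ ≤ K / (1 + |x|) ^ 3) → Integrable p := by
    intro p hp hpb
    refine Integrable.mono' ((integrable_inv_one_add_sq).const_mul K)
      hp.aestronglyMeasurable (Filter.Eventually.of_forall fun x => (hpb x).trans ?_)
    rw [← div_eq_mul_inv]
    gcongr
    rw [← sq_abs]
    have : 0 ≤ |x| := abs_nonneg x
    ring_nf
    nlinarith [pow_nonneg this 3, pow_nonneg this 2]
  constructor
  · refine hi q hq fun x => (hb x).trans ?_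
    gcongr
    · linarith [abs_nonneg x]
    · norm_num
  · refine hi _ (by fun_prop) fun x => ?_
    rw [norm_smul, Real.norm_eq_abs]
    calc |x| * ‖q x‖ ≤ (1 + |x|) * (K / (1 + |x|) ^ 4) :=
          mul_le_mul (by linarith) (hb x) (norm_nonneg _) (by positivity)
      _ = K / (1 + |x|) ^ 3 := by field_simp

lemma iu_sums (f : SchwartzMap (EuclideanSpace ℝ (Fin 8)) ℂ) (hf : IsRadial f)
    (h₁ : ∀ n : ℕ, 1 ≤ n → radVal f (Real.sqrt (2 * n)) = 0)
    (h₂ : ∀ n : ℕ, 1 ≤ n → radDeriv f (Real.sqrt (2 * n)) = 0)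
    {K : ℝ} (hK : 0 ≤ K) (hb : ∀ x, ‖iuG f x‖ ≤ K / (1 + |x|) ^ 4) (t : ℝ) :
    HasSum (fun n : ℤ => iuG f (t + n)) 0 ∧ HasSum (fun n : ℤ => (n : ℝ) • iuG f (t + n)) 0 := by
  obtain ⟨i1, i2⟩ := iu_integrable_of_decay _ (iuG_continuous f) hK hb
  have e := iu_fourier_eq f hf i1
  have hd : Differentiable ℝ (iuH f) := by
    rw [← e]
    exact fun w => (Real.hasDerivAt_fourier i1 i2 w).differentiableAt
  refine iu_poisson _ (iuG_continuous f) hK hb ?_ ?_ t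
  · intro n; rw [e]; exact iuH_zero f h₁ n
  · intro n; rw [e]; exact iuH_deriv f h₁ h₂ hd n

lemma iu_main (f : SchwartzMap (EuclideanSpace ℝ (Fin 8)) ℂ)
    (hrad : IsRadial f)
    (h₁ : ∀ n : ℕ, 1 ≤ n → radVal f (Real.sqrt (2 * n)) = 0)
    (h₂ : ∀ n : ℕ, 1 ≤ n → radDeriv f (Real.sqrt (2 * n)) = 0)
    (h₃ : ∀ n : ℕ, 1 ≤ n → radVal (FT f) (Real.sqrt (2 * n)) = 0)
    (h₄ : ∀ n : ℕ, 1 ≤ n → radDeriv (FT f) (Real.sqrt (2 * n)) = 0) :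
    f = 0 := by
  let g : ℝ → ℂ × ℂ := fun t => (iuG f t, iuG (FT f) t)
  have hgc : Continuous g := (iuG_continuous f).prodMk (iuG_continuous (FT f))
  have hS : ∀ x : ℝ, x ≠ 0 → ‖g (-1 / x)‖ = x ^ 4 * ‖g x‖ := by
    intro x hx
    have hx4 : ‖(x : ℂ) ^ 4‖ = x ^ 4 := by
      rw [norm_pow, Complex.norm_real, Real.norm_eq_abs, Even.pow_abs (by decide)]
    simp only [g, Prod.norm_def]
    rw [iuG_FT f hx, iuG_FT' f hx, norm_mul, norm_mul, hx4, max_comm,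
      mul_max_of_nonneg _ _ (by positivity)]
  obtain ⟨K, hK, hb⟩ := iu_decay g hgc hS
  have hb1 : ∀ x, ‖iuG f x‖ ≤ K / (1 + |x|) ^ 4 := fun x => (norm_fst_le (g x)).trans (hb x)
  have hb2 : ∀ x, ‖iuG (FT f) x‖ ≤ K / (1 + |x|) ^ 4 := fun x => (norm_snd_le (g x)).trans (hb x)
  have s1 := iu_sums f hrad h₁ h₂ hK hb1
  have s2 := iu_sums (FT f) (iu_FT_radial f hrad) h₃ h₄ hK hb2
  have hg := iu_core g hgc hS (fun t => (s1 t).1.prodMk (s2 t).1)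
    (fun t => (s1 t).2.prodMk (s2 t).2)
  have hG : iuG f = fun _ => 0 := funext fun t => congrArg Prod.fst (hg t)
  have hH := iu_fourier_eq f hrad (iu_integrable_of_decay _ (iuG_continuous f) hK hb1).1
  have hHz : ∀ u, iuH f u = 0 := by
    intro u
    rw [← hH, hG, Real.fourier_eq]; simp
  have hvol : volume.real (Metric.ball (0 : EuclideanSpace ℝ (Fin 8)) 1) ≠ 0 := by
    rw [Measure.real, ENNReal.toReal_ne_zero]
    exact ⟨(Metric.measure_ball_pos _ _ one_pos).ne', measure_ball_lt_top.ne⟩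
  have hpos : ∀ x : EuclideanSpace ℝ (Fin 8), x ≠ 0 → f x = 0 := by
    intro x hx
    have hx' : 0 < ‖x‖ := norm_pos_iff.2 hx
    have h := hHz (‖x‖ ^ 2 / 2)
    unfold iuH at h
    rw [max_eq_left (by positivity), show 2 * (‖x‖ ^ 2 / 2) = ‖x‖ ^ 2 by ring,
      Real.sqrt_sq hx'.le] at h
    have h5 : radVal f ‖x‖ = 0 := by
      have a1 : (((8 * volume.real (Metric.ball (0 : EuclideanSpace ℝ (Fin 8)) 1) : ℝ) : ℂ)) ≠ 0 := by
        exact_mod_cast mul_ne_zero (by norm_num) hvol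
      have a2 : ((((‖x‖ ^ 2) ^ 3 : ℝ)) : ℂ) ≠ 0 := by
        exact_mod_cast (by positivity : ((‖x‖ ^ 2) ^ 3 : ℝ) ≠ 0)
      exact (mul_eq_zero.1 ((mul_eq_zero.1 h).resolve_left a1)).resolve_left a2
    rw [← h5]
    exact hrad _ _ (by rw [iu_norm_e _ hx'.le])
  ext x
  have hd : Dense ({0}ᶜ : Set (EuclideanSpace ℝ (Fin 8))) := dense_compl_singleton 0
  have := Continuous.ext_on hd f.continuous continuous_const (fun y hy => hpos y hy)
  exact congrFun this x

end

/-- Uniqueness in the interpolation theorem in dimension 8: a radial Schwartz function on `ℝ⁸`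
all of whose values and radial derivatives, together with those of its Fourier transform,
vanish at the radii `√(2n)` for integers `n ≥ 1`, is identically zero. -/
theorem interpolation_uniqueness_dim8 (f : SchwartzMap (EuclideanSpace ℝ (Fin 8)) ℂ)
    (hrad : IsRadial f)
    (h₁ : ∀ n : ℕ, 1 ≤ n → radVal f (Real.sqrt (2 * n)) = 0)
    (h₂ : ∀ n : ℕ, 1 ≤ n → radDeriv f (Real.sqrt (2 * n)) = 0)
    (h₃ : ∀ n : ℕ, 1 ≤ n → radVal (FT f) (Real.sqrt (2 * n)) = 0)
    (h₄ : ∀ n : ℕ, 1 ≤ n → radDeriv (FT f) (Real.sqrt (2 * n)) = 0) :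
    f = 0 := by
  exact iu_main f hrad h₁ h₂ h₃ h₄

end
end

section
/- Let k be an even integer, let F : ℍ → ℂ be holomorphic, let 𝒮 ⊆ ℍ, and let C, N ≥ 0 be real numbers such that ‖F(g • i)‖ ≤ C·‖g‖_F^{N} for every g ∈ SL₂(ℝ) with g • i ∈ 𝒮. Then for all γ, g ∈ SL₂(ℝ) with (γ·g) • i ∈ 𝒮, writing τ = g • i and letting c, d be the bottom-row entries of γ, one has ‖(c·τ + d)^{−k} · F(γ • τ)‖ ≤ C · ‖γ‖_F^{N+|k|} · ‖g‖_F^{N+2|k|}. -/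
open scoped MatrixGroups Manifold
open UpperHalfPlane

/-- The Frobenius norm of an element of `SL₂(ℝ)`. -/
noncomputable def frobNorm (g : Matrix.SpecialLinearGroup (Fin 2) ℝ) : ℝ :=
  Real.sqrt (∑ i : Fin 2, ∑ j : Fin 2, ((g : Matrix (Fin 2) (Fin 2) ℝ) i j) ^ 2)

lemma frob_sq (g : Matrix.SpecialLinearGroup (Fin 2) ℝ) :
    frobNorm g ^ 2 = g.1 0 0 ^ 2 + g.1 0 1 ^ 2 + g.1 1 0 ^ 2 + g.1 1 1 ^ 2 := by
  unfold frobNorm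
  rw [Real.sq_sqrt (by positivity)]
  simp only [Fin.sum_univ_two]
  ring

lemma frob_nonneg (g : Matrix.SpecialLinearGroup (Fin 2) ℝ) : 0 ≤ frobNorm g :=
  Real.sqrt_nonneg _

lemma frob_det (g : Matrix.SpecialLinearGroup (Fin 2) ℝ) :
    g.1 0 0 * g.1 1 1 - g.1 0 1 * g.1 1 0 = 1 := by
  have := g.2
  rwa [Matrix.det_fin_two] at this

lemma frob_one_le (g : Matrix.SpecialLinearGroup (Fin 2) ℝ) : 1 ≤ frobNorm g := by
  have h := frob_sq g
  have hd := frob_det g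
  have h0 := frob_nonneg g
  nlinarith [sq_nonneg (g.1 0 0 - g.1 1 1), sq_nonneg (g.1 0 1 + g.1 1 0)]

lemma frob_mul_le (γ g : Matrix.SpecialLinearGroup (Fin 2) ℝ) :
    frobNorm (γ * g) ≤ frobNorm γ * frobNorm g := by
  apply (pow_le_pow_iff_left₀ (by first | exact frob_nonneg _ | exact norm_nonneg _ | exact zero_le_one) (mul_nonneg (frob_nonneg _) (frob_nonneg _)) two_ne_zero).1
  rw [mul_pow, frob_sq, frob_sq, frob_sq]
  simp only [Matrix.SpecialLinearGroup.coe_mul, Matrix.mul_apply, Fin.sum_univ_two]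
  nlinarith [sq_nonneg (γ.1 0 0 * g.1 1 0 - γ.1 0 1 * g.1 0 0),
    sq_nonneg (γ.1 0 0 * g.1 1 1 - γ.1 0 1 * g.1 0 1),
    sq_nonneg (γ.1 1 0 * g.1 1 0 - γ.1 1 1 * g.1 0 0),
    sq_nonneg (γ.1 1 0 * g.1 1 1 - γ.1 1 1 * g.1 0 1)]

lemma norm_j_sq (c d : ℝ) : ‖(c : ℂ) * Complex.I + d‖ ^ 2 = c ^ 2 + d ^ 2 := by
  rw [Complex.sq_norm, Complex.normSq_apply]
  simp
  ring

lemma norm_j_le (g : Matrix.SpecialLinearGroup (Fin 2) ℝ) :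
    ‖(g.1 1 0 : ℂ) * Complex.I + g.1 1 1‖ ≤ frobNorm g := by
  apply (pow_le_pow_iff_left₀ (by first | exact frob_nonneg _ | exact norm_nonneg _ | exact zero_le_one) (frob_nonneg _) two_ne_zero).1
  rw [norm_j_sq, frob_sq]
  nlinarith [sq_nonneg (g.1 0 0), sq_nonneg (g.1 0 1)]

lemma one_le_norm_j (g : Matrix.SpecialLinearGroup (Fin 2) ℝ) :
    1 ≤ frobNorm g * ‖(g.1 1 0 : ℂ) * Complex.I + g.1 1 1‖ := by
  apply (pow_le_pow_iff_left₀ (by first | exact frob_nonneg _ | exact norm_nonneg _ | exact zero_le_one) (mul_nonneg (frob_nonneg _) (norm_nonneg _)) two_ne_zero).1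
  rw [mul_pow, norm_j_sq, frob_sq]
  have hd := frob_det g
  have e : (g.1 0 0 ^ 2 + g.1 0 1 ^ 2) * (g.1 1 0 ^ 2 + g.1 1 1 ^ 2)
      = 1 + (g.1 0 0 * g.1 1 0 + g.1 0 1 * g.1 1 1) ^ 2 := by
    linear_combination (g.1 0 0 * g.1 1 1 - g.1 0 1 * g.1 1 0 + 1) * hd
  nlinarith [sq_nonneg (g.1 0 0 * g.1 1 0 + g.1 0 1 * g.1 1 1),
    sq_nonneg (g.1 1 0 ^ 2 + g.1 1 1 ^ 2)]

lemma cocycle_aux (p q a b c d i : ℂ) (h : c * i + d ≠ 0) :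
    (p * ((a * i + b) / (c * i + d)) + q) * (c * i + d) = p * (a * i + b) + q * (c * i + d) := by
  rw [add_mul, mul_assoc, div_mul_cancel₀ _ h]

lemma cocycle (γ g : Matrix.SpecialLinearGroup (Fin 2) ℝ) :
    ((γ.1 1 0 : ℂ) * ((g • UpperHalfPlane.I : UpperHalfPlane) : ℂ) + (γ.1 1 1 : ℂ))
      * ((g.1 1 0 : ℂ) * Complex.I + g.1 1 1)
      = ((γ * g).1 1 0 : ℂ) * Complex.I + (γ * g).1 1 1 := by
  have h0 : ((g.1 1 0 : ℂ) * Complex.I + g.1 1 1) ≠ 0 := by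
    intro h
    have := one_le_norm_j g
    rw [h] at this
    norm_num at this
  rw [UpperHalfPlane.coe_specialLinearGroup_apply]
  simp only [Matrix.SpecialLinearGroup.coe_mul, Matrix.mul_apply, Fin.sum_univ_two,
    UpperHalfPlane.coe_I, Complex.ofReal_add, Complex.ofReal_mul, Algebra.algebraMap_self, RingHom.id_apply]
  exact (cocycle_aux _ _ _ _ _ _ _ h0).trans (by ring)

lemma norm_zpow_le (z : ℂ) (B : ℝ) (k : ℤ) (h1 : ‖z‖ ≤ B) (h2 : 1 ≤ B * ‖z‖) :
    ‖z ^ (-k)‖ ≤ B ^ |(k : ℝ)| := by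
  have hz : 0 < ‖z‖ := by
    rcases (norm_nonneg z).eq_or_lt with h | h
    · rw [← h] at h2; norm_num at h2
    · exact h
  rw [norm_zpow, ← Int.cast_abs, Real.rpow_intCast]
  rcases le_total 0 k with h | h
  · rw [abs_of_nonneg h, zpow_neg, ← inv_zpow]
    apply zpow_le_zpow_left₀ h (by positivity)
    rwa [inv_le_iff_one_le_mul₀ hz]
  · rw [abs_of_nonpos h]
    exact zpow_le_zpow_left₀ (by omega) (by positivity) h1

/-- If a holomorphic `F : ℍ → ℂ` satisfies `‖F(g·i)‖ ≤ C‖g‖_F^N` whenever `g·i ∈ 𝒮`, then its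
weight-`k` slash translate satisfies
`‖(cτ+d)^{-k} F(γ·τ)‖ ≤ C ‖γ‖_F^{N+|k|} ‖g‖_F^{N+2|k|}` for `τ = g·i` with `γ·(g·i) ∈ 𝒮`. -/
theorem slash_moderate_growth (k : ℤ) (hk : Even k) (F : UpperHalfPlane → ℂ)
    (hF : MDifferentiable 𝓘(ℂ) 𝓘(ℂ) F)
    (S : Set UpperHalfPlane) (C N : ℝ) (hC : 0 ≤ C) (hN : 0 ≤ N)
    (hbound : ∀ g : Matrix.SpecialLinearGroup (Fin 2) ℝ,
      g • UpperHalfPlane.I ∈ S → ‖F (g • UpperHalfPlane.I)‖ ≤ C * frobNorm g ^ N) :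
    ∀ γ g : Matrix.SpecialLinearGroup (Fin 2) ℝ, (γ * g) • UpperHalfPlane.I ∈ S →
      ‖(((γ : Matrix (Fin 2) (Fin 2) ℝ) 1 0 : ℂ) * ((g • UpperHalfPlane.I : UpperHalfPlane) : ℂ)
            + ((γ : Matrix (Fin 2) (Fin 2) ℝ) 1 1 : ℂ)) ^ (-k)
          * F (γ • (g • UpperHalfPlane.I))‖
        ≤ C * frobNorm γ ^ (N + |(k : ℝ)|) * frobNorm g ^ (N + 2 * |(k : ℝ)|) := by
  intro γ g hS
  have hFb := hbound (γ * g) hS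
  rw [mul_smul] at hFb
  have hγ := frob_one_le γ
  have hg := frob_one_le g
  have hm := frob_mul_le γ g
  have hB0 : 0 ≤ frobNorm γ * frobNorm g ^ 2 := by positivity
  have hJ : ‖(γ.1 1 0 : ℂ) * ((g • UpperHalfPlane.I : UpperHalfPlane) : ℂ) + (γ.1 1 1 : ℂ)‖
      * ‖(g.1 1 0 : ℂ) * Complex.I + g.1 1 1‖
      = ‖((γ * g).1 1 0 : ℂ) * Complex.I + (γ * g).1 1 1‖ := by
    rw [← norm_mul, cocycle]
  have a1 := norm_j_le g
  have a2 := one_le_norm_j g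
  have b1 := norm_j_le (γ * g)
  have b2 := one_le_norm_j (γ * g)
  rw [← hJ] at b1 b2
  have hz := norm_zpow_le (B := frobNorm γ * frobNorm g ^ 2) (k := k)
    (z := (γ.1 1 0 : ℂ) * ((g • UpperHalfPlane.I : UpperHalfPlane) : ℂ) + (γ.1 1 1 : ℂ))
    (by
      calc _ ≤ ‖(γ.1 1 0 : ℂ) * ((g • UpperHalfPlane.I : UpperHalfPlane) : ℂ) + (γ.1 1 1 : ℂ)‖
            * (frobNorm g * ‖(g.1 1 0 : ℂ) * Complex.I + g.1 1 1‖) :=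
            le_mul_of_one_le_right (norm_nonneg _) a2
        _ = frobNorm g * (‖(γ.1 1 0 : ℂ) * ((g • UpperHalfPlane.I : UpperHalfPlane) : ℂ)
            + (γ.1 1 1 : ℂ)‖ * ‖(g.1 1 0 : ℂ) * Complex.I + g.1 1 1‖) := by ring
        _ ≤ frobNorm g * (frobNorm γ * frobNorm g) := by
            exact mul_le_mul_of_nonneg_left (b1.trans hm) (frob_nonneg _)
        _ = _ := by ring)
    (by
      calc (1 : ℝ) ≤ _ := b2
        _ ≤ (frobNorm γ * frobNorm g) *
            (‖(γ.1 1 0 : ℂ) * ((g • UpperHalfPlane.I : UpperHalfPlane) : ℂ) + (γ.1 1 1 : ℂ)‖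
              * frobNorm g) := by gcongr
        _ = _ := by ring)
  rw [norm_mul]
  have hF2 : ‖F (γ • g • UpperHalfPlane.I)‖ ≤ C * (frobNorm γ * frobNorm g) ^ N :=
    hFb.trans (mul_le_mul_of_nonneg_left (Real.rpow_le_rpow (frob_nonneg _) hm hN) hC)
  refine (mul_le_mul hz hF2 (norm_nonneg _) (by positivity)).trans (le_of_eq ?_)
  rw [Real.mul_rpow (by positivity) (by positivity), Real.mul_rpow (by positivity) (by positivity),
    Real.rpow_add (by positivity), Real.rpow_add (by positivity), Real.rpow_mul (by positivity)]
  norm_cast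
  ring
end

section
/- Let a, b, c, d, e be integers with a·d − b·c = 1, b² + d² < a² + c², and e ≠ 0. Then a² + c² < (b + 2ea)² + (d + 2ec)². -/
/-- Column-domination inductive step: if `[[a,b],[c,d]] ∈ SL₂(ℤ)` has first column strictly
longer than the second, then right multiplication by a nonzero power `T^{2e}` of `T²` makes the
second column strictly longer than the first. -/
theorem column_domination_step (a b c d e : ℤ) (hdet : a * d - b * c = 1)
    (hcol : b ^ 2 + d ^ 2 < a ^ 2 + c ^ 2) (he : e ≠ 0) :
    a ^ 2 + c ^ 2 < (b + 2 * e * a) ^ 2 + (d + 2 * e * c) ^ 2 := by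
  have hN : 0 ≤ a ^ 2 + c ^ 2 := by positivity
  rcases lt_or_gt_of_ne he with h | h
  · have h1 : 0 ≤ (-e) * ((a - b) ^ 2 + (c - d) ^ 2) :=
      mul_nonneg (by omega) (by positivity)
    have h2 : 0 ≤ (e * (e + 1)) * (a ^ 2 + c ^ 2) :=
      mul_nonneg (mul_nonneg_of_nonpos_of_nonpos (by omega) (by omega)) hN
    have h3 : 0 < (-2 * e - 1) * ((a ^ 2 + c ^ 2) - (b ^ 2 + d ^ 2)) :=
      mul_pos (by omega) (by linarith)
    linarith
  · have h1 : 0 ≤ e * ((a + b) ^ 2 + (c + d) ^ 2) :=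
      mul_nonneg (by omega) (by positivity)
    have h2 : 0 ≤ (e * (e - 1)) * (a ^ 2 + c ^ 2) :=
      mul_nonneg (mul_nonneg (by omega) (by omega)) hN
    have h3 : 0 < (2 * e - 1) * ((a ^ 2 + c ^ 2) - (b ^ 2 + d ^ 2)) :=
      mul_pos (by omega) (by linarith)
    linarith
end

section
/- For v ∈ R = ℂ[G], there exists w ∈ R satisfying (T − 1)·v = (S + 1)·w if and only if there exists r ∈ R with v = (y² − y + 1)·(x + 1)·r, where x = S and y = S·T. That is, {v ∈ R : (T−1)·v ∈ (S+1)·R} is exactly the right ideal (y² − y + 1)(x + 1)·R. -/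
open scoped MatrixGroups

/-- `PSL₂(ℤ)`: the quotient of `SL₂(ℤ)` by its center `{±I}`. -/
abbrev PSL2Z : Type :=
  Matrix.SpecialLinearGroup (Fin 2) ℤ ⧸ Subgroup.center (Matrix.SpecialLinearGroup (Fin 2) ℤ)

/-- The image of `T = [[1,1],[0,1]]` in `PSL₂(ℤ)`. -/
def Tg : PSL2Z := QuotientGroup.mk ModularGroup.T

/-- The image of `S = [[0,-1],[1,0]]` in `PSL₂(ℤ)`. -/
def Sg : PSL2Z := QuotientGroup.mk ModularGroup.S

/-- The element `x = S` of `PSL₂(ℤ)`. -/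
def xg : PSL2Z := Sg

/-- The element `y = S·T` of `PSL₂(ℤ)`. -/
def yg : PSL2Z := Sg * Tg

/-- The embedding of the group `PSL₂(ℤ)` into its complex group algebra. -/
noncomputable def ofG : PSL2Z → MonoidAlgebra ℂ PSL2Z := MonoidAlgebra.of ℂ PSL2Z

lemma Sg_mul_Sg : Sg * Sg = 1 := by
  unfold Sg
  rw [← QuotientGroup.mk_mul, QuotientGroup.eq_one_iff, Subgroup.mem_center_iff]
  intro g
  have h : ModularGroup.S * ModularGroup.S = (-1 : SL(2, ℤ)) := by
    ext i j; fin_cases i <;> fin_cases j <;>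
      simp [Matrix.SpecialLinearGroup.coe_mul, ModularGroup.coe_S, ModularGroup.coe_T]
  rw [h]; simp

lemma yg_cube : yg * yg * yg = 1 := by
  unfold yg Sg Tg
  simp only [← QuotientGroup.mk_mul]
  rw [QuotientGroup.eq_one_iff, Subgroup.mem_center_iff]
  intro g
  have h : ModularGroup.S * ModularGroup.T * (ModularGroup.S * ModularGroup.T) *
      (ModularGroup.S * ModularGroup.T) = (-1 : SL(2, ℤ)) := by
    ext i j; fin_cases i <;> fin_cases j <;>
      simp [Matrix.SpecialLinearGroup.coe_mul, ModularGroup.coe_S, ModularGroup.coe_T]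
  rw [h]; simp

lemma Tg_eq : Tg = Sg * yg := by
  unfold yg; rw [← mul_assoc, Sg_mul_Sg, one_mul]

lemma ofG_mul (a b : PSL2Z) : ofG (a * b) = ofG a * ofG b := map_mul _ a b

lemma ofG_one : ofG 1 = 1 := map_one (MonoidAlgebra.of ℂ PSL2Z)

/-- In `R = ℂ[PSL₂(ℤ)]` with `x = S`, `y = ST`: there exists `w` with `(T-1)v = (S+1)w`
iff `v` lies in the right ideal `(y² - y + 1)(x + 1)·R`. -/
theorem T_sub_one_eq_S_add_one_iff (v : MonoidAlgebra ℂ PSL2Z) :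
    (∃ w : MonoidAlgebra ℂ PSL2Z, (ofG Tg - 1) * v = (ofG Sg + 1) * w) ↔
    (∃ r : MonoidAlgebra ℂ PSL2Z,
      v = (ofG yg ^ 2 - ofG yg + 1) * (ofG xg + 1) * r) := by
  have hx : ofG Sg * ofG Sg = 1 := by rw [← ofG_mul, Sg_mul_Sg, ofG_one]
  have hy : ofG yg * ofG yg * ofG yg = 1 := by
    rw [← ofG_mul, ← ofG_mul, yg_cube, ofG_one]
  rw [Tg_eq, ofG_mul, show xg = Sg from rfl]
  generalize ofG Sg = x at *
  generalize ofG yg = y at *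
  have h1 : (y ^ 2 - y + 1) * (y + 1) = 2 := by
    have : (y ^ 2 - y + 1) * (y + 1) = y * y * y + 1 := by noncomm_ring
    rw [this, hy]; norm_num
  have h2 : (y + 1) * (y ^ 2 - y + 1) = 2 := by
    have : (y + 1) * (y ^ 2 - y + 1) = y * y * y + 1 := by noncomm_ring
    rw [this, hy]; norm_num
  have hxx : x * (x + 1) = x + 1 := by rw [mul_add, hx, mul_one, add_comm]
  constructor
  · rintro ⟨w, hw⟩
    have h3 : x * ((y + 1) * v) = (x + 1) * (w + v) := by
      rw [mul_add (x + 1), ← hw]; noncomm_ring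
    have h4 : (y + 1) * v = (x + 1) * (w + v) := by
      calc (y + 1) * v = x * (x * ((y + 1) * v)) := by rw [← mul_assoc x x, hx, one_mul]
        _ = (x + 1) * (w + v) := by rw [h3, ← mul_assoc, hxx]
    have h5 : (2 : MonoidAlgebra ℂ PSL2Z) * v = (y ^ 2 - y + 1) * (x + 1) * (w + v) := by
      rw [mul_assoc, ← h4, ← mul_assoc, h1]
    refine ⟨(1 / 2 : ℂ) • (w + v), ?_⟩
    rw [mul_smul_comm, ← h5, two_mul, ← two_smul ℂ v, smul_smul]
    norm_num
  · rintro ⟨r, hr⟩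
    refine ⟨2 * r - v, ?_⟩
    have h3 : (y + 1) * v = 2 * ((x + 1) * r) := by
      rw [hr, mul_assoc, ← mul_assoc (y + 1), h2]
    have h4 : (x * y - 1) * v = x * ((y + 1) * v) - (x + 1) * v := by noncomm_ring
    have h5 : x * (2 * ((x + 1) * r)) = 2 * ((x * (x + 1)) * r) := by noncomm_ring
    rw [h4, h3, h5, hxx]
    noncomm_ring
end

section
/- Let I be the right ideal of R = ℂ[G] consisting of all elements of the form (T − 1)²·r + S·(T − 1)²·r′ with r, r′ ∈ R. Then for every w ∈ R there exists a unique tuple (c₁, c₂, c₃, c₄, c₅, c₆) ∈ ℂ⁶ such that w − (c₁·1 + c₂·T + c₃·T·S + c₄·S + c₅·S·T + c₆·S·T·S) ∈ I. In particular, R/I is a six-dimensional complex vector space with basis the images of 1, T, TS, S, ST, STS. -/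
open scoped MatrixGroups

namespace PSLAux

/-- A monoid homomorphism out of a finite cyclic group. -/
def cyc {M : Type*} [Monoid M] (n : ℕ) [NeZero n] (g : M) (hg : g ^ n = 1) :
    Multiplicative (ZMod n) →* M where
  toFun a := g ^ (Multiplicative.toAdd a).val
  map_one' := by simp
  map_mul' a b := by
    rw [toAdd_mul, ZMod.val_add, ← pow_add]
    conv_rhs => rw [← Nat.mod_add_div ((Multiplicative.toAdd a).val + (Multiplicative.toAdd b).val) n]
    rw [pow_add, pow_mul, hg, one_pow, mul_one]

theorem mk_eq_of_neg (A B : Matrix.SpecialLinearGroup (Fin 2) ℤ) (h : A = -B) :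
    (QuotientGroup.mk A : PSL2Z) = QuotientGroup.mk B := by
  rw [QuotientGroup.eq, Matrix.SpecialLinearGroup.mem_center_iff]
  refine ⟨-1, by simp, ?_⟩
  have : A⁻¹ * B = -1 := by
    rw [inv_mul_eq_iff_eq_mul, h]; simp
  rw [this]
  ext i j
  fin_cases i <;> fin_cases j <;> simp

theorem S_sq : Sg * Sg = 1 := by
  change (QuotientGroup.mk (ModularGroup.S * ModularGroup.S) : PSL2Z) = QuotientGroup.mk 1
  exact mk_eq_of_neg _ _ (by decide)

theorem Y_cube : (Sg * Tg) ^ 3 = 1 := by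
  change (QuotientGroup.mk ((ModularGroup.S * ModularGroup.T) ^ 3) : PSL2Z) = QuotientGroup.mk 1
  exact mk_eq_of_neg _ _ (by decide)

theorem T_inv : Tg⁻¹ = Sg * Tg * Sg * Tg * Sg := by
  refine inv_eq_of_mul_eq_one_left ?_
  have h := Y_cube
  simpa only [pow_succ, pow_zero, one_mul, mul_assoc] using h

theorem gen_induction {p : PSL2Z → Prop} (one : p 1) (mul : ∀ x y, p x → p y → p (x * y))
    (hS : p Sg) (hT : p Tg) (g : PSL2Z) : p g := by
  have hT' : p Tg⁻¹ := by
    rw [T_inv]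
    exact mul _ _ (mul _ _ (mul _ _ (mul _ _ hS hT) hS) hT) hS
  have hS' : p Sg⁻¹ := by
    rw [inv_eq_of_mul_eq_one_left S_sq]; exact hS
  obtain ⟨M, rfl⟩ := QuotientGroup.mk_surjective g
  have hM : M ∈ Subgroup.closure {ModularGroup.S, ModularGroup.T} := by
    rw [SpecialLinearGroup.SL2Z_generators]; trivial
  induction hM using Subgroup.closure_induction'' with
  | mem x hx =>
    rcases hx with rfl | rfl
    · exact hS
    · exact hT
  | inv_mem x hx =>
    rcases hx with rfl | rfl
    · exact hS'
    · exact hT'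
  | one => exact one
  | mul x y _ _ hx hy => exact mul _ _ hx hy

/-- Product of the entries of the first column; well defined up to sign of the matrix. -/
def phi (g : PSL2Z) : ℤ :=
  Quotient.liftOn' g (fun M => M 0 0 * M 1 0) (by
    intro A B h
    rw [QuotientGroup.leftRel_apply, Matrix.SpecialLinearGroup.mem_center_iff] at h
    obtain ⟨r, hr, h⟩ := h
    have hB : (B : Matrix (Fin 2) (Fin 2) ℤ) = A.1 * Matrix.scalar (Fin 2) r := by
      rw [h, ← Matrix.SpecialLinearGroup.coe_mul]; simp
    have hr : r * r = 1 := by rw [← sq]; simpa using hr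
    have h0 : B.1 0 0 = A.1 0 0 * r := by rw [hB, Matrix.scalar_apply, Matrix.mul_diagonal]
    have h1 : B.1 1 0 = A.1 1 0 * r := by rw [hB, Matrix.scalar_apply, Matrix.mul_diagonal]
    change A.1 0 0 * A.1 1 0 = B.1 0 0 * B.1 1 0
    rw [h0, h1]
    linear_combination (-(A.1 0 0 * A.1 1 0)) * hr)

theorem phi_mk (M : Matrix.SpecialLinearGroup (Fin 2) ℤ) :
    phi (QuotientGroup.mk M) = M.1 0 0 * M.1 1 0 := rfl

/-- Orders of the two cyclic factors. -/
def ord (b : Bool) : ℕ := if b then 3 else 2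

instance (b : Bool) : NeZero (ord b) := by
  cases b <;> exact ⟨by decide⟩

/-- The two generators. -/
def gen (b : Bool) : PSL2Z := if b then Sg * Tg else Sg

theorem gen_pow (b : Bool) : gen b ^ ord b = 1 := by
  cases b
  · change Sg ^ 2 = 1
    rw [sq, S_sq]
  · exact Y_cube

/-- The two cyclic groups. -/
abbrev Hc (b : Bool) : Type := Multiplicative (ZMod (ord b))

/-- The inclusions of the two cyclic groups. -/
def fc (b : Bool) : Hc b →* PSL2Z := cyc (ord b) (gen b) (gen_pow b)

/-- The ping-pong sets. -/
def Xs (b : Bool) : Set PSL2Z := if b then {g | phi g < 0} else {g | 0 < phi g}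

theorem ping_S (g : PSL2Z) (h : phi g < 0) : 0 < phi (Sg * g) := by
  obtain ⟨M, rfl⟩ := QuotientGroup.mk_surjective g
  change 0 < phi (QuotientGroup.mk (ModularGroup.S * M))
  rw [phi_mk] at h ⊢
  have e : (ModularGroup.S * M).1 = !![0, -1; 1, 0] * M.1 := rfl
  rw [e]
  simp [Matrix.mul_apply, Fin.sum_univ_two]
  nlinarith

theorem ping_Y (g : PSL2Z) (h : 0 < phi g) : phi (Sg * Tg * g) < 0 := by
  obtain ⟨M, rfl⟩ := QuotientGroup.mk_surjective g
  change phi (QuotientGroup.mk (ModularGroup.S * ModularGroup.T * M)) < 0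
  rw [phi_mk] at h ⊢
  have e : (ModularGroup.S * ModularGroup.T * M).1
      = !![0, -1; 1, 0] * !![1, 1; 0, 1] * M.1 := rfl
  rw [e]
  simp [Matrix.mul_apply, Fin.sum_univ_two]
  nlinarith [sq_nonneg (M.1 1 0)]

theorem ping_YY (g : PSL2Z) (h : 0 < phi g) : phi ((Sg * Tg) ^ 2 * g) < 0 := by
  obtain ⟨M, rfl⟩ := QuotientGroup.mk_surjective g
  change phi (QuotientGroup.mk ((ModularGroup.S * ModularGroup.T) ^ 2 * M)) < 0
  rw [phi_mk] at h ⊢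
  have e : ((ModularGroup.S * ModularGroup.T) ^ 2 * M).1
      = (!![0, -1; 1, 0] * !![1, 1; 0, 1]) * (!![0, -1; 1, 0] * !![1, 1; 0, 1]) * M.1 := by
    rw [sq]; rfl
  rw [e]
  simp [Matrix.mul_apply, Fin.sum_univ_two]
  nlinarith [sq_nonneg (M.1 0 0)]

theorem lift_inj : Function.Injective (Monoid.CoprodI.lift fc) := by
  refine Monoid.CoprodI.lift_injective_of_ping_pong (α := PSL2Z) fc (Or.inr ⟨true, ?_⟩) Xs ?_ ?_ ?_
  · change 3 ≤ Cardinal.mk (ZMod 3)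
    simp
  · intro b
    cases b
    · refine ⟨QuotientGroup.mk ⟨!![1, 0; 1, 1], by simp⟩, ?_⟩
      change (0 : ℤ) < 1 * 1
      norm_num
    · refine ⟨QuotientGroup.mk ⟨!![1, 0; -1, 1], by simp⟩, ?_⟩
      change (1 : ℤ) * (-1) < 0
      norm_num
  · intro a b hab
    rw [Function.onFun, Set.disjoint_left]
    intro g
    cases a <;> cases b
    · exact absurd rfl hab
    · exact fun (h : 0 < phi g) (h' : phi g < 0) => by omega
    · exact fun (h : phi g < 0) (h' : 0 < phi g) => by omega
    · exact absurd rfl hab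
  · intro a b hab h hh
    rintro _ ⟨g, hg, rfl⟩
    cases a <;> cases b
    · exact absurd rfl hab
    · have hg : phi g < 0 := hg
      change 0 < phi (Sg ^ (ZMod.val (n := 2) h) * g)
      change ZMod 2 at h
      change h ≠ 0 at hh
      fin_cases h
      · exact absurd rfl hh
      · change 0 < phi (Sg ^ 1 * g)
        rw [pow_one]; exact ping_S g hg
    · have hg : 0 < phi g := hg
      change phi ((Sg * Tg) ^ (ZMod.val (n := 3) h) * g) < 0
      change ZMod 3 at h
      change h ≠ 0 at hh
      fin_cases h
      · exact absurd rfl hh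
      · change phi ((Sg * Tg) ^ 1 * g) < 0
        rw [pow_one]; exact ping_Y g hg
      · exact ping_YY g hg
    · exact absurd rfl hab

theorem lift_of (b : Bool) : Monoid.CoprodI.lift fc (Monoid.CoprodI.of (i := b)
    (Multiplicative.ofAdd (1 : ZMod (ord b)))) = gen b := by
  rw [Monoid.CoprodI.lift_of]
  cases b
  · exact pow_one _
  · exact pow_one _

theorem lift_surj : Function.Surjective (Monoid.CoprodI.lift fc) := by
  have hS : ∃ a, Monoid.CoprodI.lift fc a = Sg := ⟨_, lift_of false⟩
  have hY : ∃ a, Monoid.CoprodI.lift fc a = Sg * Tg := ⟨_, lift_of true⟩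
  intro g
  induction g using gen_induction with
  | one => exact ⟨1, map_one _⟩
  | mul x y hx hy =>
    obtain ⟨a, rfl⟩ := hx
    obtain ⟨b, rfl⟩ := hy
    exact ⟨a * b, map_mul _ _ _⟩
  | hS => exact hS
  | hT =>
    obtain ⟨a, ha⟩ := hS
    obtain ⟨b, hb⟩ := hY
    refine ⟨a * b, ?_⟩
    rw [map_mul, ha, hb, ← mul_assoc, S_sq, one_mul]

/-- `PSL₂(ℤ)` is a free product of cyclic groups of orders 2 and 3. -/
noncomputable def equivFree : Monoid.CoprodI Hc ≃* PSL2Z :=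
  MulEquiv.ofBijective (Monoid.CoprodI.lift fc) ⟨lift_inj, lift_surj⟩

theorem exists_hom {M : Type*} [Monoid M] (s t : M) (hs : s * s = 1) (hst : (s * t) ^ 3 = 1) :
    ∃ f : PSL2Z →* M, f Sg = s ∧ f Tg = t := by
  let k : ∀ b, Hc b →* M := fun b => match b with
    | false => cyc 2 s (by rw [sq, hs])
    | true => cyc 3 (s * t) hst
  let f : PSL2Z →* M := (Monoid.CoprodI.lift k).comp equivFree.symm.toMonoidHom
  have key : ∀ a, f (Monoid.CoprodI.lift fc a) = Monoid.CoprodI.lift k a := by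
    intro a
    change Monoid.CoprodI.lift k (equivFree.symm (equivFree a)) = _
    rw [MulEquiv.symm_apply_apply]
  have h1 : f Sg = s := by
    have := key (Monoid.CoprodI.of (i := false) (Multiplicative.ofAdd (1 : ZMod (ord false))))
    rw [lift_of, Monoid.CoprodI.lift_of] at this
    exact this.trans (pow_one _)
  have h2 : f (Sg * Tg) = s * t := by
    have := key (Monoid.CoprodI.of (i := true) (Multiplicative.ofAdd (1 : ZMod (ord true))))
    rw [lift_of, Monoid.CoprodI.lift_of] at this
    exact this.trans (pow_one _)
  refine ⟨f, h1, ?_⟩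
  have : Tg = Sg * (Sg * Tg) := by rw [← mul_assoc, S_sq, one_mul]
  rw [this, map_mul, h1, h2, ← mul_assoc, hs, one_mul]

/-- The matrix of right multiplication by `S`. -/
def mS : Matrix (Fin 6) (Fin 6) ℤ :=
  !![0,0,0,1,0,0; 0,0,1,0,0,0; 0,1,0,0,0,0; 1,0,0,0,0,0; 0,0,0,0,0,1; 0,0,0,0,1,0]

/-- The matrix of right multiplication by `T`. -/
def mT : Matrix (Fin 6) (Fin 6) ℤ :=
  !![0,1,0,0,0,0; -1,2,0,0,0,0; 2,0,0,0,0,-1; 0,0,0,0,1,0; 0,0,0,-1,2,0; 0,0,-1,2,0,0]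

theorem exists_alg : ∃ F : MonoidAlgebra ℂ PSL2Z →ₐ[ℂ] Matrix (Fin 6) (Fin 6) ℂ,
    F (ofG Sg) = (Int.castRingHom ℂ).mapMatrix mS ∧
    F (ofG Tg) = (Int.castRingHom ℂ).mapMatrix mT := by
  obtain ⟨f, h1, h2⟩ := exists_hom ((Int.castRingHom ℂ).mapMatrix mS)
    ((Int.castRingHom ℂ).mapMatrix mT)
    (by rw [← map_mul, ← map_one ((Int.castRingHom ℂ).mapMatrix)]; congr 1; decide)
    (by rw [← map_mul, ← map_pow, ← map_one ((Int.castRingHom ℂ).mapMatrix)]; congr 1; decide)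
  refine ⟨MonoidAlgebra.lift ℂ _ _ f, ?_, ?_⟩
  · rw [← h1]; exact MonoidAlgebra.lift_of _ _
  · rw [← h2]; exact MonoidAlgebra.lift_of _ _

theorem ofG_mul (a b : PSL2Z) : ofG (a * b) = ofG a * ofG b :=
  map_mul (MonoidAlgebra.of ℂ PSL2Z) a b

theorem ofG_one : ofG 1 = 1 := map_one (MonoidAlgebra.of ℂ PSL2Z)

/-- `w` is congruent to a combination of the six basis elements. -/
def Red (w : MonoidAlgebra ℂ PSL2Z) : Prop :=
  ∃ c : Fin 6 → ℂ, ∃ r r' : MonoidAlgebra ℂ PSL2Z,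
      w - (c 0 • (1 : MonoidAlgebra ℂ PSL2Z) + c 1 • ofG Tg + c 2 • ofG (Tg * Sg)
          + c 3 • ofG Sg + c 4 • ofG (Sg * Tg) + c 5 • ofG (Sg * Tg * Sg))
        = (ofG Tg - 1) ^ 2 * r + ofG Sg * (ofG Tg - 1) ^ 2 * r'

theorem Red.add {v w : MonoidAlgebra ℂ PSL2Z} (hv : Red v) (hw : Red w) : Red (v + w) := by
  obtain ⟨c, r, r', h⟩ := hv
  obtain ⟨d, q, q', k⟩ := hw
  refine ⟨c + d, r + q, r' + q', ?_⟩
  rw [sub_eq_iff_eq_add] at h k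
  rw [h, k]
  simp only [Pi.add_apply, add_smul, mul_add]
  abel

theorem Red.smul {v : MonoidAlgebra ℂ PSL2Z} (a : ℂ) (hv : Red v) : Red (a • v) := by
  obtain ⟨c, r, r', h⟩ := hv
  refine ⟨a • c, a • r, a • r', ?_⟩
  rw [mul_smul_comm, mul_smul_comm, ← smul_add, ← h]
  simp only [Pi.smul_apply, smul_eq_mul, smul_add, smul_sub, mul_smul]

theorem Red.mulS {w : MonoidAlgebra ℂ PSL2Z} (hw : Red w) : Red (w * ofG Sg) := by
  obtain ⟨c, r, r', h⟩ := hw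
  refine ⟨![c 3, c 2, c 1, c 0, c 5, c 4], r * ofG Sg, r' * ofG Sg, ?_⟩
  rw [sub_eq_iff_eq_add] at h
  have hs : ofG Sg * ofG Sg = 1 := by rw [← ofG_mul, S_sq, ofG_one]
  rw [h]
  simp only [ofG_mul, add_mul, smul_mul_assoc, mul_assoc, hs, one_mul, mul_one]
  simp
  abel

theorem Red.mulT {w : MonoidAlgebra ℂ PSL2Z} (hw : Red w) : Red (w * ofG Tg) := by
  obtain ⟨c, r, r', h⟩ := hw
  have hs : ofG Sg * ofG Sg = 1 := by rw [← ofG_mul, S_sq, ofG_one]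
  have hu : ofG Tg * ofG Tg⁻¹ = 1 := by rw [← ofG_mul, mul_inv_cancel, ofG_one]
  have g1 : Tg * Sg * Tg = Sg * Tg⁻¹ * Sg := by
    have hS : Sg * (Sg * (Tg * (Sg * Tg))) = Tg * (Sg * Tg) := by
      rw [← mul_assoc, S_sq, one_mul]
    simp only [T_inv, mul_assoc, S_sq, mul_one, hS]
  have h1 : ofG Tg * (ofG Sg * ofG Tg) = ofG Sg * (ofG Tg⁻¹ * ofG Sg) := by
    simpa only [ofG_mul, mul_assoc] using congrArg ofG g1
  have h2 : ∀ x, ofG Sg * (ofG Sg * x) = x := by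
    intro x
    rw [← mul_assoc, hs, one_mul]
  have hD : (ofG Tg - 1) ^ 2 = ofG Tg * ofG Tg - 2 • ofG Tg + 1 := by noncomm_ring
  have hDu : (ofG Tg - 1) ^ 2 * ofG Tg⁻¹ = ofG Tg - 2 • 1 + ofG Tg⁻¹ := by
    rw [hD, add_mul, sub_mul, mul_assoc, hu, smul_mul_assoc, hu, mul_one, one_mul]
  refine ⟨![-c 1 + 2 * c 2, c 0 + 2 * c 1, -c 5, -c 4 + 2 * c 5, c 3 + 2 * c 4, -c 2],
    r * ofG Tg + c 1 • 1 + c 5 • (ofG Tg⁻¹ * ofG Sg),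
    r' * ofG Tg + c 4 • 1 + c 2 • (ofG Tg⁻¹ * ofG Sg), ?_⟩
  rw [sub_eq_iff_eq_add] at h
  rw [h]
  have e1 : (ofG Tg - 1) ^ 2 * (ofG Tg⁻¹ * ofG Sg)
      = ofG Tg * ofG Sg - (2 : ℂ) • ofG Sg + ofG Tg⁻¹ * ofG Sg := by
    rw [← mul_assoc, hDu]
    simp only [add_mul, sub_mul, smul_mul_assoc, one_mul, two_smul]
  have e2 : (ofG Tg - 1) ^ 2 = ofG Tg * ofG Tg - (2 : ℂ) • ofG Tg + 1 := by
    rw [hD, two_smul, two_smul]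
  simp only [mul_add, add_mul, mul_smul_comm, smul_mul_assoc, mul_assoc, e1, ofG_mul, h1, h2,
    mul_one, one_mul]
  generalize (ofG Tg - 1) ^ 2 * (r * ofG Tg) = A
  generalize ofG Sg * ((ofG Tg - 1) ^ 2 * (r' * ofG Tg)) = B
  rw [e2]
  simp only [mul_add, mul_sub, mul_smul_comm, hs, mul_one]
  simp
  module

theorem red_all (w : MonoidAlgebra ℂ PSL2Z) : Red w := by
  induction w using MonoidAlgebra.induction_on with
  | of g =>
    have key : ∀ g : PSL2Z, ∀ w, Red w → Red (w * ofG g) := by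
      intro g
      induction g using gen_induction with
      | one => intro w hw; rwa [ofG_one, mul_one]
      | mul x y hx hy => intro w hw; rw [ofG_mul, ← mul_assoc]; exact hy _ (hx _ hw)
      | hS => exact fun w hw => hw.mulS
      | hT => exact fun w hw => hw.mulT
    have h1 : Red 1 := ⟨![1, 0, 0, 0, 0, 0], 0, 0, by simp⟩
    have := key g 1 h1
    rwa [one_mul] at this
  | add x y hx hy => exact hx.add hy
  | smul a x hx => exact hx.smul a

theorem row_unique : ∃ L : MonoidAlgebra ℂ PSL2Z → Fin 6 → ℂ,
    ∀ w (c : Fin 6 → ℂ), (∃ r r' : MonoidAlgebra ℂ PSL2Z,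
      w - (c 0 • (1 : MonoidAlgebra ℂ PSL2Z) + c 1 • ofG Tg + c 2 • ofG (Tg * Sg)
          + c 3 • ofG Sg + c 4 • ofG (Sg * Tg) + c 5 • ofG (Sg * Tg * Sg))
        = (ofG Tg - 1) ^ 2 * r + ofG Sg * (ofG Tg - 1) ^ 2 * r') → c = L w := by
  obtain ⟨F, hS, hT⟩ := exists_alg
  refine ⟨fun w => F w 0, ?_⟩
  rintro w c ⟨r, r', h⟩
  have h0 : ∀ A B : Matrix (Fin 6) (Fin 6) ℂ, A 0 = 0 → (A * B) 0 = 0 := by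
    intro A B hA
    ext j
    simp [Matrix.mul_apply, hA]
  have d1 : (F ((ofG Tg - 1) ^ 2)) 0 = 0 := by
    have : F ((ofG Tg - 1) ^ 2) = (Int.castRingHom ℂ).mapMatrix ((mT - 1) ^ 2) := by
      simp only [map_pow, map_sub, map_one, hT]
    have e : ∀ j, ((mT - 1) ^ 2 : Matrix (Fin 6) (Fin 6) ℤ) 0 j = 0 := by decide
    rw [this]; ext j
    change ((((mT - 1) ^ 2 : Matrix (Fin 6) (Fin 6) ℤ) 0 j : ℤ) : ℂ) = 0
    rw [e, Int.cast_zero]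
  have d2 : (F (ofG Sg * (ofG Tg - 1) ^ 2)) 0 = 0 := by
    have : F (ofG Sg * (ofG Tg - 1) ^ 2) = (Int.castRingHom ℂ).mapMatrix (mS * (mT - 1) ^ 2) := by
      simp only [map_mul, map_pow, map_sub, map_one, hT, hS]
    have e : ∀ j, (mS * (mT - 1) ^ 2 : Matrix (Fin 6) (Fin 6) ℤ) 0 j = 0 := by decide
    rw [this]; ext j
    change (((mS * (mT - 1) ^ 2 : Matrix (Fin 6) (Fin 6) ℤ) 0 j : ℤ) : ℂ) = 0
    rw [e, Int.cast_zero]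
  rw [sub_eq_iff_eq_add] at h
  have hb : ∀ (x : MonoidAlgebra ℂ PSL2Z) (m : Matrix (Fin 6) (Fin 6) ℤ) (i : Fin 6),
      F x = (Int.castRingHom ℂ).mapMatrix m → (∀ j, m 0 j = if j = i then 1 else 0) →
      F x 0 = Pi.single i 1 := by
    intro x m i hx hm
    rw [hx]; ext j
    change ((m 0 j : ℤ) : ℂ) = _
    rw [hm, Pi.single_apply]
    split_ifs <;> simp
  have b0 := hb 1 1 0 (by simp only [map_one]) (by decide)
  have b1 := hb (ofG Tg) mT 1 hT (by decide)
  have b2 := hb (ofG (Tg * Sg)) (mT * mS) 2 (by simp only [ofG_mul, map_mul, hS, hT]) (by decide)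
  have b3 := hb (ofG Sg) mS 3 hS (by decide)
  have b4 := hb (ofG (Sg * Tg)) (mS * mT) 4 (by simp only [ofG_mul, map_mul, hS, hT]) (by decide)
  have b5 := hb (ofG (Sg * Tg * Sg)) (mS * mT * mS) 5
    (by simp only [ofG_mul, map_mul, hS, hT]) (by decide)
  have hadd : ∀ x y, F (x + y) 0 = F x 0 + F y 0 := by
    intro x y; rw [map_add]; rfl
  have hsmul : ∀ (a : ℂ) x, F (a • x) 0 = a • F x 0 := by
    intro a x; rw [map_smul]; rfl
  have m1 : F ((ofG Tg - 1) ^ 2 * r) 0 = 0 := by rw [map_mul]; exact h0 _ _ d1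
  have m2 : F (ofG Sg * (ofG Tg - 1) ^ 2 * r') 0 = 0 := by rw [map_mul]; exact h0 _ _ d2
  change c = F w 0
  rw [h]
  simp only [hadd, hsmul, m1, m2, b0, b1, b2, b3, b4, b5]
  ext j
  fin_cases j <;> simp [Pi.single_apply]

end PSLAux

/-- `R/𝓘` is six-dimensional with basis the images of `I, T, TS, S, ST, STS`, where
`𝓘 = (T-1)²R + S(T-1)²R`: every `w ∈ R = ℂ[PSL₂(ℤ)]` is congruent modulo `𝓘` to a unique
linear combination of `1, T, TS, S, ST, STS`. -/
theorem basis_mod_ideal (w : MonoidAlgebra ℂ PSL2Z) :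
    ∃! c : Fin 6 → ℂ, ∃ r r' : MonoidAlgebra ℂ PSL2Z,
      w - (c 0 • (1 : MonoidAlgebra ℂ PSL2Z) + c 1 • ofG Tg + c 2 • ofG (Tg * Sg)
          + c 3 • ofG Sg + c 4 • ofG (Sg * Tg) + c 5 • ofG (Sg * Tg * Sg))
        = (ofG Tg - 1) ^ 2 * r + ofG Sg * (ofG Tg - 1) ^ 2 * r' := by
  obtain ⟨c, hc⟩ := PSLAux.red_all w
  obtain ⟨L, hL⟩ := PSLAux.row_unique
  exact ⟨c, hc, fun d hd => (hL w d hd).trans (hL w c hc).symm⟩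
end
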